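/- In a flag 3-polytope, any k-gonal facet (k ≥ 3) is surrounded by a k-belt, i.e. the k facets adjacent to it, taken in cyclic order around its boundary, form a k-belt. -/

import Mathlib

open Set

noncomputable section

/-- The ambient space `ℝ³`. -/
abbrev E3 := EuclideanSpace ℝ (Fin 3)

/-- The cyclic successor in `Fin k`. -/
def nxt {k : ℕ} (i : Fin k) : Fin k := ⟨(i.1 + 1) % k, Nat.mod_lt _ i.pos⟩

/-- The cyclic predecessor in `Fin k`. -/
def prv {k : ℕ} (i : Fin k) : Fin k := ⟨(i.1 + (k - 1)) % k, Nat.mod_lt _ i.pos⟩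

/-- A convex polytope in `ℝ³`: the convex hull of a finite set of points. -/
def IsPolytope (P : Set E3) : Prop := ∃ V : Finset E3, P = convexHull ℝ (V : Set E3)

/-- The dimension of a subset of `ℝ³` (the dimension of its affine hull). -/
def setDim (A : Set E3) : ℕ := Module.finrank ℝ ↥(vectorSpan ℝ A)

/-- A face of a polytope: a nonempty closed convex extreme subset. -/
def IsFaceOf (F P : Set E3) : Prop :=
  F.Nonempty ∧ IsClosed F ∧ Convex ℝ F ∧ IsExtreme ℝ P F

/-- A facet: a `2`-dimensional face. -/
def IsFacetOf (F P : Set E3) : Prop := IsFaceOf F P ∧ setDim F = 2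

/-- An edge: a `1`-dimensional face. -/
def IsEdgeOf (F P : Set E3) : Prop := IsFaceOf F P ∧ setDim F = 1

/-- A vertex: a point whose singleton is a face. -/
def IsVertexOf (v : E3) (P : Set E3) : Prop := IsFaceOf {v} P

/-- The set of facets of `P`. -/
def facets (P : Set E3) : Set (Set E3) := {F | IsFacetOf F P}

/-- A simple 3-polytope: a 3-dimensional convex polytope each of whose vertices
is contained in exactly 3 facets. -/
def IsSimplePolytope3 (P : Set E3) : Prop :=
  IsPolytope P ∧ setDim P = 3 ∧
    ∀ v : E3, IsVertexOf v P → {F | IsFacetOf F P ∧ v ∈ F}.ncard = 3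

/-- The number of edges of a facet `F` of `P`. -/
def facetEdges (P F : Set E3) : ℕ := {e | IsEdgeOf e P ∧ e ⊆ F}.ncard

/-- `pVec P k` is the number of `k`-gonal facets of `P`. -/
def pVec (P : Set E3) (k : ℕ) : ℕ := {F | IsFacetOf F P ∧ facetEdges P F = k}.ncard

/-- A (mathematical) fullerene: a simple 3-polytope with all facets pentagons
and hexagons. -/
def IsFullerene (P : Set E3) : Prop :=
  IsSimplePolytope3 P ∧ ∀ F, IsFacetOf F P → facetEdges P F = 5 ∨ facetEdges P F = 6

/-- A `k`-loop in `P` (`k ≥ 2`): a cyclic sequence of facets in which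
(cyclically) consecutive facets intersect in an edge; a `1`-loop is a single facet. -/
def IsLoop (P : Set E3) {k : ℕ} (L : Fin k → Set E3) : Prop :=
  0 < k ∧ (∀ i, IsFacetOf (L i) P) ∧ (2 ≤ k → ∀ i, IsEdgeOf (L i ∩ L (nxt i)) P)

/-- A simple loop: a loop with pairwise different facets. -/
def IsSimpleLoop (P : Set E3) {k : ℕ} (L : Fin k → Set E3) : Prop :=
  IsLoop P L ∧ Function.Injective L

/-- A `k`-belt (`k ≥ 3`): a `k`-loop such that for `k = 3` the three facets have empty
total intersection, and for `k ≥ 4` two facets intersect iff they are cyclically successive. -/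
def IsBelt (P : Set E3) {k : ℕ} (L : Fin k → Set E3) : Prop :=
  3 ≤ k ∧ IsLoop P L ∧
    (k = 3 → ∀ i, L i ∩ L (nxt i) ∩ L (nxt (nxt i)) = ∅) ∧
    (4 ≤ k → ∀ p q, p ≠ q → ((L p ∩ L q).Nonempty ↔ q = nxt p ∨ p = nxt q))

/-- A flag 3-polytope: a simple 3-polytope different from the tetrahedron
(i.e. not having exactly 4 facets) without 3-belts. -/
def IsFlag3Polytope (P : Set E3) : Prop :=
  IsSimplePolytope3 P ∧ (facets P).ncard ≠ 4 ∧ ∀ B : Fin 3 → Set E3, ¬ IsBelt P B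

/-- `γ` is the simple edge-cycle of `P` traced by the cyclically ordered distinct
vertices `v 0, …, v (n-1)` (`n ≥ 3`), consecutive ones joined by edges of `P`. -/
def IsSimpleEdgeCycleVia (P γ : Set E3) {n : ℕ} (v : Fin n → E3) : Prop :=
  3 ≤ n ∧ Function.Injective v ∧ (∀ i, IsVertexOf (v i) P) ∧
    (∀ i, IsEdgeOf (segment ℝ (v i) (v (nxt i))) P) ∧
    γ = ⋃ i, segment ℝ (v i) (v (nxt i))

/-- A simple edge-cycle in the graph of `P`. -/
def IsSimpleEdgeCycle (P γ : Set E3) : Prop :=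
  ∃ (n : ℕ) (v : Fin n → E3), IsSimpleEdgeCycleVia P γ v

/-- `C` is a connected component of the set `A`. -/
def IsCompOf (C A : Set E3) : Prop := ∃ x ∈ A, C = connectedComponentIn A x

/-- The loop `L` is obtained by walking round the simple edge-cycle `γ` inside the
connected component `C` of `∂P ∖ γ`: the facets of `L` lie on the side `C`, and the
edges of `γ`, in cyclic order, lie in the facets of `L` in cyclic order (the loop
index advancing exactly when the facet changes, and making exactly one turn). -/
def WalksRound (P γ C : Set E3) {k : ℕ} (L : Fin k → Set E3) : Prop :=
  IsLoop P L ∧ (∀ i, intrinsicInterior ℝ (L i) ⊆ C) ∧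
    ∃ (n : ℕ) (v : Fin n → E3) (φ : Fin n → Fin k),
      IsSimpleEdgeCycleVia P γ v ∧
      (∀ i, segment ℝ (v i) (v (nxt i)) ⊆ L (φ i)) ∧
      (∀ i, φ (nxt i) = φ i ∨ φ (nxt i) = nxt (φ i)) ∧
      Function.Surjective φ ∧
      (2 ≤ k → (Finset.univ.filter (fun i : Fin n => φ (nxt i) ≠ φ i)).card = k)

/-- Two loops border each other: they are obtained by walking round the same simple
edge-cycle `γ` in the two different connected components of `∂P ∖ γ`. -/
def Borders (P : Set E3) {k₁ k₂ : ℕ} (L₁ : Fin k₁ → Set E3) (L₂ : Fin k₂ → Set E3) : Prop :=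
  ∃ γ C₁ C₂ : Set E3, IsCompOf C₁ (frontier P \ γ) ∧ IsCompOf C₂ (frontier P \ γ) ∧
    C₁ ≠ C₂ ∧ WalksRound P γ C₁ L₁ ∧ WalksRound P γ C₂ L₂

/-- A loop surrounds the facet `F` if it borders the `1`-loop `(F)`. -/
def Surrounds (P : Set E3) {k : ℕ} (L : Fin k → Set E3) (F : Set E3) : Prop :=
  IsFacetOf F P ∧ Borders P L (fun _ : Fin 1 => F)

/-- The number of edges of `P` lying in the facet `F` and in the set `γ`. -/
def edgesInCommon (P F γ : Set E3) : ℕ := {e | IsEdgeOf e P ∧ e ⊆ F ∧ e ⊆ γ}.ncard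
/-- A simple 3-polytope all of whose facets are pentagons and hexagons except for
at most one exceptional facet, which is a quadrangle or a heptagon. -/
def IsAlmostFullerene (P : Set E3) : Prop :=
  IsSimplePolytope3 P ∧
    (∀ F, IsFacetOf F P → facetEdges P F ∈ ({4, 5, 6, 7} : Set ℕ)) ∧
    {F | IsFacetOf F P ∧ (facetEdges P F = 4 ∨ facetEdges P F = 7)}.ncard ≤ 1

/-- The (combinatorial) dodecahedron: a simple 3-polytope with all facets pentagons. -/
def IsDodecahedron (P : Set E3) : Prop :=
  IsSimplePolytope3 P ∧ ∀ F, IsFacetOf F P → facetEdges P F = 5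

/-- `e` and `e'` are opposite edges of the hexagonal facet `H`: they are disjoint and no
edge of `H` meets both of them. -/
def OppositeEdges (P H e e' : Set E3) : Prop :=
  IsEdgeOf e P ∧ IsEdgeOf e' P ∧ e ⊆ H ∧ e' ⊆ H ∧ e ∩ e' = ∅ ∧
    ∀ e'', IsEdgeOf e'' P → e'' ⊆ H → (e'' ∩ e).Nonempty → e'' ≠ e → e'' ∩ e' = ∅

/-- A cap: a pentagonal facet `F₀` together with a surrounding 5-belt of pentagons. -/
def IsCapOf (P F₀ : Set E3) (L : Fin 5 → Set E3) : Prop :=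
  IsFacetOf F₀ P ∧ facetEdges P F₀ = 5 ∧ (∀ i, facetEdges P (L i) = 5) ∧
    IsBelt P L ∧ Surrounds P L F₀

/-- The number of 5-belts of `P` (counted as sets of facets). -/
def fiveBeltCount (P : Set E3) : ℕ :=
  {S : Set (Set E3) | ∃ B : Fin 5 → Set E3, IsBelt P B ∧ S = Set.range B}.ncard

/-- The structure of the `k`-th fullerene of Family I: two caps separated by `k`
hexagonal 5-belts, each bordering the next (for `k = 0` the caps border each other,
giving the dodecahedron). -/
def FamilyI (P : Set E3) (k : ℕ) : Prop :=
  ∃ (F₀ F₀' : Set E3) (L L' : Fin 5 → Set E3) (B : ℕ → Fin 5 → Set E3),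
    IsCapOf P F₀ L ∧ IsCapOf P F₀' L' ∧
    (∀ i < k, IsBelt P (B i) ∧ ∀ j, facetEdges P (B i j) = 6) ∧
    (∀ i, i + 1 < k → Borders P (B i) (B (i + 1))) ∧
    (0 < k → Borders P L (B 0) ∧ Borders P (B (k - 1)) L') ∧
    (k = 0 → Borders P L L') ∧
    facets P = {F₀, F₀'} ∪ Set.range L ∪ Set.range L' ∪ ⋃ i ∈ Set.Iio k, Set.range (B i)

/-- `P` is obtained from `Q` by an `(s,k;t₀,t₁)`-truncation with new edge `Enew`:
`P` is cut off from `Q` by a halfspace `{f ≤ c}` whose boundary plane crosses exactly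
two edges `E₀ ≠ E₁` of a `k`-gonal facet `F` of `Q`, cutting off exactly `s` vertices,
all belonging to `F`; `G₀` and `G₁` are the facets meeting `F` along `E₀` and `E₁`, and
they are `t₀`- and `t₁`-gons; `Enew` is the new edge dividing `F`. -/
def IsTruncation (s k t₀ t₁ : ℕ) (Q P Enew : Set E3) : Prop :=
  IsSimplePolytope3 Q ∧ IsSimplePolytope3 P ∧
    ∃ (F E₀ E₁ G₀ G₁ : Set E3) (f : E3 →ₗ[ℝ] ℝ) (c : ℝ),
      IsFacetOf F Q ∧ facetEdges Q F = k ∧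
      IsEdgeOf E₀ Q ∧ IsEdgeOf E₁ Q ∧ E₀ ≠ E₁ ∧ E₀ ⊆ F ∧ E₁ ⊆ F ∧
      IsFacetOf G₀ Q ∧ IsFacetOf G₁ Q ∧ G₀ ≠ F ∧ G₁ ≠ F ∧ E₀ ⊆ G₀ ∧ E₁ ⊆ G₁ ∧
      facetEdges Q G₀ = t₀ ∧ facetEdges Q G₁ = t₁ ∧
      P = Q ∩ {x | f x ≤ c} ∧
      (∀ e, IsEdgeOf e Q → (∃ x ∈ e, c < f x) → (∃ x ∈ e, f x < c) → e = E₀ ∨ e = E₁) ∧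
      (∃ x ∈ E₀, c < f x) ∧ (∃ x ∈ E₀, f x < c) ∧
      (∃ x ∈ E₁, c < f x) ∧ (∃ x ∈ E₁, f x < c) ∧
      (∀ v, IsVertexOf v Q → f v ≠ c) ∧
      {v | IsVertexOf v Q ∧ c < f v}.ncard = s ∧
      (∀ v, IsVertexOf v Q → c < f v → v ∈ F) ∧
      Enew = F ∩ {x | f x = c}

/-- Combinatorial equivalence of polytopes: an inclusion-preserving bijection
between the sets of faces. -/
def CombEquiv (P Q : Set E3) : Prop :=
  ∃ φ : {A : Set E3 // IsFaceOf A P} ≃ {A : Set E3 // IsFaceOf A Q},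
    ∀ A B : {A : Set E3 // IsFaceOf A P}, A.1 ⊆ B.1 ↔ (φ A).1 ⊆ (φ B).1

/-- Combinatorial equivalence sending the face `Ep` of `P` to the face `Eq` of `Q`. -/
def CombEquivMapping (P Q Ep Eq : Set E3) : Prop :=
  ∃ φ : {A : Set E3 // IsFaceOf A P} ≃ {A : Set E3 // IsFaceOf A Q},
    (∀ A B : {A : Set E3 // IsFaceOf A P}, A.1 ⊆ B.1 ↔ (φ A).1 ⊆ (φ B).1) ∧
    ∀ h : IsFaceOf Ep P, ((φ ⟨Ep, h⟩) : {A : Set E3 // IsFaceOf A Q}).1 = Eq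

/-- The straightening of `P` along the edge `E` is defined: `P` is combinatorially
obtained from some simple 3-polytope `Q` by an `(s,k)`-truncation whose new edge
corresponds to `E`. -/
def StraighteningDefined (P E : Set E3) : Prop :=
  ∃ (s k t₀ t₁ : ℕ) (Q P₁ E₁ : Set E3),
    IsTruncation s k t₀ t₁ Q P₁ E₁ ∧ CombEquivMapping P P₁ E E₁

/-- `P` is obtained from `Q` by one of the truncations
`(1;4,5)`, `(1;5,5)`, `(2,6;4,5)`, `(2,6;5,5)`, `(2,6;5,6)`, `(2,7;5,5)`, `(2,7;5,6)`. -/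
def FullereneStep (Q P : Set E3) : Prop :=
  ∃ (s k t₀ t₁ : ℕ) (Enew : Set E3), IsTruncation s k t₀ t₁ Q P Enew ∧
    ((s = 1 ∧ (({t₀, t₁} : Finset ℕ) = {4, 5} ∨ ({t₀, t₁} : Finset ℕ) = {5, 5})) ∨
     (s = 2 ∧ k = 6 ∧ (({t₀, t₁} : Finset ℕ) = {4, 5} ∨ ({t₀, t₁} : Finset ℕ) = {5, 5} ∨
        ({t₀, t₁} : Finset ℕ) = {5, 6})) ∨
     (s = 2 ∧ k = 7 ∧ (({t₀, t₁} : Finset ℕ) = {5, 5} ∨ ({t₀, t₁} : Finset ℕ) = {5, 6})))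


/-- Two-dimensional determinant with respect to two linear coordinates. -/
def dt {E : Type*} [AddCommGroup E] [Module ℝ E] (p q : E →ₗ[ℝ] ℝ) (x y : E) : ℝ :=
  p x * q y - q x * p y

section poly
variable {E : Type*} [AddCommGroup E] [Module ℝ E] {g p q : E →ₗ[ℝ] ℝ} {c : ℝ}

lemma dt_cramer (hinj : ∀ s, g s = 0 → p s = 0 → q s = 0 → s = 0) {b d x : E}
    (hb : g b = 0) (hd : g d = 0) (hx : g x = 0) :
    dt p q b d • x = dt p q x d • b + dt p q b x • d := by
  rw [← sub_eq_zero]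
  apply hinj
  · simp [hb, hd, hx]
  · simp [dt]; ring
  · simp [dt]; ring

lemma general_pos (hinj : ∀ s, g s = 0 → p s = 0 → q s = 0 → s = 0) {W : Finset E}
    (hW : ∀ w ∈ W, g w = c)
    (hexp : ∀ x ∈ W, ∃ φ : E →ₗ[ℝ] ℝ, ∀ y ∈ W, y ≠ x → φ y < φ x)
    {a b d : E} (ha : a ∈ W) (hb : b ∈ W) (hd : d ∈ W) (hab : a ≠ b) (had : a ≠ d) (hbd : b ≠ d) :
    dt p q (b - a) (d - a) ≠ 0 := by
  intro h0
  have gb : g (b - a) = 0 := by simp [hW _ ha, hW _ hb]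
  have gd : g (d - a) = 0 := by simp [hW _ ha, hW _ hd]
  -- d - a = t (b - a)
  have key : ∃ t : ℝ, d - a = t • (b - a) := by
    have hne : p (b - a) ≠ 0 ∨ q (b - a) ≠ 0 := by
      by_contra! h
      exact hab (sub_eq_zero.1 (hinj _ gb h.1 h.2)).symm
    rcases hne with h | h
    · refine ⟨p (d - a) / p (b - a), ?_⟩
      rw [← sub_eq_zero]
      apply hinj
      · rw [map_sub, map_smul, gb, gd]; simp
      · rw [map_sub, map_smul, smul_eq_mul]; field_simp; ring
      · rw [map_sub, map_smul, smul_eq_mul]; field_simp; unfold dt at h0; linarith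
    · refine ⟨q (d - a) / q (b - a), ?_⟩
      rw [← sub_eq_zero]
      apply hinj
      · rw [map_sub, map_smul, gb, gd]; simp
      · rw [map_sub, map_smul, smul_eq_mul]; field_simp; unfold dt at h0; linarith
      · rw [map_sub, map_smul, smul_eq_mul]; field_simp; ring
  obtain ⟨t, ht⟩ := key
  have hphi : ∀ φ : E →ₗ[ℝ] ℝ, φ d = φ a + t * (φ b - φ a) := by
    intro φ
    have := congrArg φ ht
    simp at this
    linarith
  have t0 : t ≠ 0 := by
    rintro rfl
    simp at ht
    exact had (sub_eq_zero.1 ht).symm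
  have t1 : t ≠ 1 := by
    rintro rfl
    simp at ht
    exact hbd ht.symm
  rcases lt_trichotomy t 0 with h | h | h
  · obtain ⟨φ, hφ⟩ := hexp a ha
    have h1 := hφ b hb hab.symm
    have h2 := hφ d hd had.symm
    rw [hphi φ] at h2
    nlinarith
  · exact t0 h
  · rcases lt_trichotomy t 1 with h' | h' | h'
    · obtain ⟨φ, hφ⟩ := hexp d hd
      have h1 := hφ b hb hbd
      have h2 := hφ a ha had
      rw [hphi φ] at h1 h2
      nlinarith
    · exact t1 h'
    · obtain ⟨φ, hφ⟩ := hexp b hb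
      have h1 := hφ a ha hab
      have h2 := hφ d hd hbd.symm
      rw [hphi φ] at h2
      nlinarith

lemma exists_succ (hinj : ∀ s, g s = 0 → p s = 0 → q s = 0 → s = 0) {W : Finset E}
    (hW : ∀ w ∈ W, g w = c)
    (hexp : ∀ x ∈ W, ∃ φ : E →ₗ[ℝ] ℝ, ∀ y ∈ W, y ≠ x → φ y < φ x)
    (hcard : 1 < W.card) {a : E} (ha : a ∈ W) :
    ∃ b ∈ W, b ≠ a ∧ ∀ y ∈ W, 0 ≤ dt p q (b - a) (y - a) := by
  classical
  obtain ⟨φ, hφ⟩ := hexp a ha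
  obtain ⟨m, hm, hma⟩ := Finset.exists_mem_ne hcard a
  obtain ⟨b, hb, hmin⟩ := Finset.exists_min_image (W.erase a)
    (fun y => dt p q (m - a) (y - a) / (φ a - φ y)) ⟨m, Finset.mem_erase.2 ⟨hma, hm⟩⟩
  rw [Finset.mem_erase] at hb
  refine ⟨b, hb.2, hb.1, fun y hy => ?_⟩
  by_cases hya : y = a
  · subst hya; simp [dt]
  have h := hmin y (Finset.mem_erase.2 ⟨hya, hy⟩)
  have hb' : 0 < φ a - φ b := sub_pos.2 (hφ b hb.2 hb.1)
  have hy' : 0 < φ a - φ y := sub_pos.2 (hφ y hy hya)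
  have hm' : 0 < φ a - φ m := sub_pos.2 (hφ m hm hma)
  rw [div_le_div_iff₀ hb' hy'] at h
  have hg : ∀ z ∈ W, g (z - a) = 0 := fun z hz => by simp [hW _ ha, hW _ hz]
  have hc := congrArg φ (dt_cramer hinj (hg b hb.2) (hg y hy) (hg m hm))
  simp only [map_add, map_smul, map_sub, smul_eq_mul] at hc
  have e1 : dt p q (b - a) (m - a) = - dt p q (m - a) (b - a) := by unfold dt; ring
  rw [e1] at hc
  have : 0 ≤ dt p q (b - a) (y - a) * (φ a - φ m) := by nlinarith
  exact nonneg_of_mul_nonneg_left this hm'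

lemma polygon_order (hinj : ∀ s, g s = 0 → p s = 0 → q s = 0 → s = 0) {W : Finset E}
    (hW : ∀ w ∈ W, g w = c)
    (hexp : ∀ x ∈ W, ∃ φ : E →ₗ[ℝ] ℝ, ∀ y ∈ W, y ≠ x → φ y < φ x)
    (hcard : 2 < W.card) :
    ∃ v : Fin W.card → E, Function.Injective v ∧ (∀ x, x ∈ W ↔ ∃ i, v i = x) ∧
      ∀ i, ∀ y ∈ W, 0 ≤ dt p q (v (nxt i) - v i) (y - v i) := by
  classical
  have hs := fun a : W => exists_succ hinj hW hexp (by omega) a.2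
  choose s hsW hsne hsdt using hs
  let f : W → W := fun a => ⟨s a, hsW a⟩
  have finj : Function.Injective f := by
    intro a a' h
    have h : s a = s a' := congrArg Subtype.val h
    by_contra hne
    have hne' : (a : E) ≠ a' := fun h => hne (Subtype.ext h)
    have h1 := hsdt a a' a'.2
    have h2 := hsdt a' a a.2
    have h3 := general_pos hinj hW hexp a.2 (hsW a) a'.2 (hsne a).symm hne' (h ▸ hsne a')
    rw [← h] at h2
    apply h3
    have : dt p q (s a - a') (a - a') = - dt p q (s a - a) (a' - a) := by
      simp only [dt, map_sub]; ring
    linarith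
  let σ : Equiv.Perm W := Equiv.ofBijective f (Finite.injective_iff_bijective.1 finj)
  have σv : ∀ a, ((σ a : W) : E) = s a := fun a => rfl
  have hcyc : σ.IsCycleOn ((Finset.univ : Finset W) : Set W) := by
    refine ⟨by simpa using σ.bijective, ?_⟩
    intro x _ y _
    by_contra hxy
    obtain ⟨φ, hφ⟩ := hexp y y.2
    obtain ⟨a, ha, hmax⟩ := Finset.exists_max_image
      (Finset.univ.filter (fun z : W => ¬ σ.SameCycle z y)) (fun z => φ z)
      ⟨x, by simpa using hxy⟩
    simp only [Finset.mem_filter, Finset.mem_univ, true_and] at ha hmax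
    have hb := hmax (σ a) (by rwa [Equiv.Perm.sameCycle_apply_left])
    have hd := hmax (σ⁻¹ a) (by
      intro h
      apply ha
      rw [← Equiv.Perm.sameCycle_apply_left] at h
      simpa using h)
    have hya : y ≠ a := by rintro rfl; exact ha (Equiv.Perm.SameCycle.refl _ _)
    have hy := hφ a a.2 (fun h => hya (Subtype.ext h).symm)
    set b := σ a with hb'
    set d := σ⁻¹ a with hd'
    have hσd : σ d = a := by simp [hd']
    have hg : ∀ z ∈ W, g (z - a) = 0 := fun z hz => by simp [hW _ a.2, hW _ hz]
    have hc := congrArg φ (dt_cramer hinj (hg b b.2) (hg d d.2) (hg y y.2))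
    simp only [map_add, map_smul, map_sub, smul_eq_mul] at hc
    have p1 : 0 ≤ dt p q (b - a : E) (y - a) := hsdt a y y.2
    have p2 : 0 ≤ dt p q (y - a : E) (d - a) := by
      have := hsdt d y y.2
      rw [← σv, hσd] at this
      have e : dt p q (y - a : E) (d - a) = dt p q (a - d : E) (y - d) := by
        simp only [dt, map_sub]; ring
      rw [e]; exact this
    have p3 : 0 ≤ dt p q (b - a : E) (d - a) := hsdt a d d.2
    have p4 : 0 < dt p q (b - a : E) (d - a) := by
      rcases p3.lt_or_eq with h | h
      · exact h
      exfalso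
      have hba : (b : E) ≠ a := hsne a
      have hda : (a : E) ≠ d := by
        have := hsne d
        rw [← σv, hσd] at this
        exact this
      by_cases hbd : (b : E) = d
      · obtain ⟨z, hz, hza, hzb⟩ : ∃ z ∈ W, z ≠ a ∧ z ≠ b := by
          by_contra! hcon
          have : W ⊆ {(a : E), (b : E)} := by
            intro z hz
            by_cases h : z = a
            · simp [h]
            · simp [hcon z hz h]
          have := Finset.card_le_card this
          have := Finset.card_le_two (a := (a : E)) (b := (b : E))
          omega
        · apply general_pos hinj hW hexp a.2 b.2 hz hba.symm hza.symm hzb.symm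
          have q1 := hsdt a z hz
          have q2 := hsdt d z hz
          rw [← σv] at q1
          rw [← σv, hσd] at q2
          rw [← hbd] at q2
          have e : dt p q (a - b : E) (z - b) = - dt p q (b - a : E) (z - a) := by
            simp only [dt, map_sub]; ring
          rw [e] at q2
          rw [← hb'] at q1
          linarith
      · exact general_pos hinj hW hexp a.2 b.2 d.2 hba.symm hda hbd h.symm
    have : 0 < dt p q (b - a : E) (d - a) * (φ y - φ a) := mul_pos p4 (by linarith)
    nlinarith
  have hne : W.Nonempty := Finset.card_pos.1 (by omega)
  obtain ⟨a0, ha0⟩ := hne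
  let a : W := ⟨a0, ha0⟩
  have hcardW : (Finset.univ : Finset W).card = W.card := by simp
  refine ⟨fun i => ((σ ^ (i : ℕ)) a : W), ?_, ?_, ?_⟩
  · intro i j hij
    have hij : (σ ^ (i : ℕ)) a = (σ ^ (j : ℕ)) a := Subtype.ext hij
    rw [hcyc.pow_apply_eq_pow_apply (Finset.mem_univ _), hcardW] at hij
    exact Fin.ext (Nat.ModEq.eq_of_lt_of_lt hij i.2 j.2)
  · intro x
    constructor
    · intro hx
      obtain ⟨n, hn, h⟩ := hcyc.exists_pow_eq (Finset.mem_univ a) (Finset.mem_univ ⟨x, hx⟩)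
      rw [hcardW] at hn
      exact ⟨⟨n, hn⟩, by simp [h]⟩
    · rintro ⟨i, rfl⟩
      exact Subtype.property _
  · intro i y hy
    have : (σ ^ ((nxt i : Fin W.card) : ℕ)) a = σ ((σ ^ (i : ℕ)) a) := by
      rw [← Equiv.Perm.mul_apply, ← pow_succ']
      rw [hcyc.pow_apply_eq_pow_apply (Finset.mem_univ _), hcardW]
      exact Nat.mod_modEq _ _
    simp only [this, σv]
    exact hsdt _ y hy

/-- the vertex order of a polygon, as a bundled predicate -/
def CycOrder (p q : E →ₗ[ℝ] ℝ) (W : Finset E) {k : ℕ} (v : Fin k → E) : Prop :=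
  Function.Injective v ∧ (∀ x, x ∈ W ↔ ∃ i, v i = x) ∧
      ∀ i, ∀ y ∈ W, 0 ≤ dt p q (v (nxt i) - v i) (y - v i)

lemma nxt_prv {k : ℕ} (i : Fin k) : nxt (prv i) = i := by
  apply Fin.ext
  have := i.2
  simp only [nxt, prv, Nat.mod_add_mod]
  rw [show i.1 + (k - 1) + 1 = i.1 + k by omega, Nat.add_mod_right, Nat.mod_eq_of_lt this]

lemma prv_nxt {k : ℕ} (i : Fin k) : prv (nxt i) = i := by
  apply Fin.ext
  have := i.2
  simp only [nxt, prv, Nat.mod_add_mod]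
  rw [show i.1 + 1 + (k - 1) = i.1 + k by omega, Nat.add_mod_right, Nat.mod_eq_of_lt this]

lemma nxt_inj {k : ℕ} {i j : Fin k} (h : nxt i = nxt j) : i = j := by
  rw [← prv_nxt i, h, prv_nxt]

lemma nxt_val {k : ℕ} (i : Fin k) : (nxt i).1 = if i.1 + 1 = k then 0 else i.1 + 1 := by
  have := i.2
  simp only [nxt]
  split_ifs with h
  · rw [h, Nat.mod_self]
  · exact Nat.mod_eq_of_lt (by omega)

lemma nxt_ne {k : ℕ} (hk : 2 ≤ k) (i : Fin k) : nxt i ≠ i := by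
  intro h
  have := congrArg Fin.val h
  rw [nxt_val] at this
  have h2 := i.2
  split_ifs at this <;> omega

lemma nxt_nxt_ne {k : ℕ} (hk : 3 ≤ k) (i : Fin k) : nxt (nxt i) ≠ i := by
  intro h
  have := congrArg Fin.val h
  rw [nxt_val, nxt_val] at this
  have h2 := i.2
  split_ifs at this <;> omega

lemma cyc_mem {W : Finset E} {k : ℕ} {v : Fin k → E} (hv : CycOrder p q W v) (i : Fin k) :
    v i ∈ W := (hv.2.1 _).2 ⟨i, rfl⟩

/-- Zero set of an edge functional on the vertices. -/
lemma cyc_zero (hinj : ∀ s, g s = 0 → p s = 0 → q s = 0 → s = 0) {W : Finset E}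
    (hW : ∀ w ∈ W, g w = c)
    (hexp : ∀ x ∈ W, ∃ φ : E →ₗ[ℝ] ℝ, ∀ y ∈ W, y ≠ x → φ y < φ x)
    {k : ℕ} (hk : 3 ≤ k) {v : Fin k → E} (hv : CycOrder p q W v) (i : Fin k) {y : E}
    (hy : y ∈ W) : dt p q (v (nxt i) - v i) (y - v i) = 0 ↔ y = v i ∨ y = v (nxt i) := by
  constructor
  · intro h
    by_contra! hcon
    exact general_pos hinj hW hexp (cyc_mem hv i) (cyc_mem hv (nxt i)) hy
      (fun h => nxt_ne (by omega) i (hv.1 h.symm)) hcon.1.symm hcon.2.symm h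
  · rintro (rfl | rfl)
    · simp [dt]
    · simp only [dt]; ring

/-- The cone at a vertex of a polygon. -/
lemma cyc_cone (hinj : ∀ s, g s = 0 → p s = 0 → q s = 0 → s = 0) {W : Finset E}
    (hW : ∀ w ∈ W, g w = c)
    (hexp : ∀ x ∈ W, ∃ φ : E →ₗ[ℝ] ℝ, ∀ y ∈ W, y ≠ x → φ y < φ x)
    {k : ℕ} (hk : 3 ≤ k) {v : Fin k → E} (hv : CycOrder p q W v) (i : Fin k) {x : E}
    (hx : g x = c) (hpos : ∀ i, 0 ≤ dt p q (v (nxt i) - v i) (x - v i)) :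
    ∃ α β : ℝ, 0 ≤ α ∧ 0 ≤ β ∧
      x - v i = α • (v (nxt i) - v i) + β • (v (prv i) - v i) := by
  have hi := cyc_mem hv i
  have hb := cyc_mem hv (nxt i)
  have hd := cyc_mem hv (prv i)
  have gg : ∀ z ∈ W, g (z - v i) = 0 := fun z hz => by simp [hW _ hi, hW _ hz]
  have hc := dt_cramer hinj (gg _ hb) (gg _ hd) (show g (x - v i) = 0 by simp [hx, hW _ hi])
  have p0 : 0 < dt p q (v (nxt i) - v i) (v (prv i) - v i) := by
    refine lt_of_le_of_ne (hv.2.2 i _ hd) (Ne.symm ?_)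
    refine general_pos hinj hW hexp hi hb hd (fun h => nxt_ne (by omega) i (hv.1 h.symm))
      (fun h => ?_) (fun h => ?_)
    · have := hv.1 h
      have h2 := nxt_ne (by omega) (prv i)
      rw [nxt_prv] at h2
      exact h2 this
    · have := hv.1 h
      have h2 := nxt_nxt_ne hk (prv i)
      rw [nxt_prv] at h2
      exact h2 this
  have p1 := hpos i
  have p2 := hpos (prv i)
  rw [nxt_prv] at p2
  have e : dt p q (v i - v (prv i)) (x - v (prv i)) = dt p q (x - v i) (v (prv i) - v i) := by
    simp only [dt, map_sub]; ring
  rw [e] at p2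
  refine ⟨_, _, div_nonneg p2 p0.le, div_nonneg p1 p0.le, ?_⟩
  have := congrArg (fun z => (dt p q (v (nxt i) - v i) (v (prv i) - v i))⁻¹ • z) hc
  simp only [smul_add, smul_smul] at this
  rw [inv_mul_cancel₀ p0.ne', one_smul] at this
  rw [div_eq_inv_mul, div_eq_inv_mul]
  exact this

end poly

lemma relint_extend {G : Set E3} {x m : E3} (hx : x ∈ intrinsicInterior ℝ G)
    (hm : m ∈ affineSpan ℝ G) : ∃ ε : ℝ, 0 < ε ∧ x + ε • (x - m) ∈ G := by
  rw [mem_intrinsicInterior] at hx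
  obtain ⟨y, hy, rfl⟩ := hx
  obtain ⟨U, hU, hUy⟩ := isOpen_induced_iff.1
    (isOpen_interior (s := ((↑) ⁻¹' G : Set (affineSpan ℝ G))))
  have hyU : (y : E3) ∈ U := by
    have : y ∈ (Subtype.val ⁻¹' U : Set (affineSpan ℝ G)) := by rw [hUy]; exact hy
    exact this
  have hcont : Continuous (fun t : ℝ => (y : E3) + t • ((y : E3) - m)) := by fun_prop
  have hnhds : (fun t : ℝ => (y : E3) + t • ((y : E3) - m)) ⁻¹' U ∈ nhds (0 : ℝ) :=
    (hU.preimage hcont).mem_nhds (by simpa using hyU)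
  obtain ⟨ε, hε, hball⟩ := Metric.mem_nhds_iff.1 hnhds
  refine ⟨ε / 2, by positivity, ?_⟩
  have h1 : (y : E3) + (ε / 2) • ((y : E3) - m) ∈ U := by
    apply hball
    rw [Metric.mem_ball, Real.dist_eq, sub_zero, abs_of_pos (by positivity)]
    linarith
  have h2 : (y : E3) + (ε / 2) • ((y : E3) - m) ∈ affineSpan ℝ G := by
    have := AffineSubspace.vadd_mem_of_mem_direction
      (Submodule.smul_mem _ (ε / 2) (AffineSubspace.vsub_mem_direction y.2 hm)) y.2
    simpa [add_comm] using this
  have h3 : (⟨_, h2⟩ : affineSpan ℝ G) ∈ (Subtype.val ⁻¹' U : Set (affineSpan ℝ G)) := h1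
  rw [hUy] at h3
  have h4 := interior_subset h3
  exact h4

lemma mem_openSegment_extend {x m : E3} {ε : ℝ} (hε : 0 < ε) :
    x ∈ openSegment ℝ m (x + ε • (x - m)) := by
  refine ⟨ε / (1 + ε), 1 / (1 + ε), by positivity, by positivity, by field_simp; ring, ?_⟩
  have h : (1 + ε) ≠ 0 := by positivity
  have : x = ((1 + ε) / (1 + ε)) • x := by rw [div_self h, one_smul]
  conv_rhs => rw [this]
  simp only [smul_add, smul_sub, smul_smul]
  module

lemma mem_of_span {G Q : Set E3} (hne : G.Nonempty) (hc : Convex ℝ G) (hex : IsExtreme ℝ Q G)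
    {m : E3} (hm : m ∈ Q) (hms : m ∈ affineSpan ℝ G) : m ∈ G := by
  obtain ⟨x, hx⟩ := hne.intrinsicInterior hc
  obtain ⟨ε, hε, h⟩ := relint_extend hx hms
  exact hex.2 hm (hex.1 h) (intrinsicInterior_subset hx) (mem_openSegment_extend hε)

lemma subset_of_relint {G Q : Set E3} (hex : IsExtreme ℝ Q G)
    {x : E3} (hx : x ∈ intrinsicInterior ℝ Q) (hxG : x ∈ G) : Q ⊆ G := by
  intro m hm
  obtain ⟨ε, hε, h⟩ := relint_extend hx (subset_affineSpan ℝ _ hm)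
  exact hex.2 hm h hxG (mem_openSegment_extend hε)

lemma mem_span_iff {G : Set E3} {a m : E3} (ha : a ∈ G) :
    m ∈ affineSpan ℝ G ↔ m - a ∈ vectorSpan ℝ G := by
  rw [← direction_affineSpan]
  have := AffineSubspace.vsub_right_mem_direction_iff_mem (subset_affineSpan ℝ _ ha) m
  simpa using this.symm

lemma eq_of_dim {G Q : Set E3} (hne : G.Nonempty) (hc : Convex ℝ G) (hex : IsExtreme ℝ Q G)
    (hd : setDim Q ≤ setDim G) : G = Q := by
  have hs : vectorSpan ℝ G = vectorSpan ℝ Q :=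
    Submodule.eq_of_le_of_finrank_le (vectorSpan_mono ℝ hex.1) hd
  refine subset_antisymm hex.1 fun m hm => ?_
  obtain ⟨a, ha⟩ := hne
  refine mem_of_span ⟨a, ha⟩ hc hex hm ?_
  rw [mem_span_iff ha, hs]
  exact vsub_mem_vectorSpan ℝ hm (hex.1 ha)

lemma setDim_mono {A B : Set E3} (h : A ⊆ B) : setDim A ≤ setDim B :=
  Submodule.finrank_mono (vectorSpan_mono ℝ h)

/-- Sign constancy. -/
lemma sign_const {G Q : Set E3} (hne : G.Nonempty) (hc : Convex ℝ G) (hQ : Convex ℝ Q)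
    (hex : IsExtreme ℝ Q G)
    (f : E3 →ₗ[ℝ] ℝ) (c : ℝ) (hG : ∀ x ∈ G, f x = c)
    (hspan : ∀ x ∈ Q, f x = c → x ∈ affineSpan ℝ G) :
    (∀ x ∈ Q, c ≤ f x) ∨ (∀ x ∈ Q, f x ≤ c) := by
  by_contra! hcon
  obtain ⟨⟨x, hx, hfx⟩, y, hy, hfy⟩ := hcon
  have hd : 0 < f y - f x := by linarith
  have hseg : ((f y - c) / (f y - f x)) • x + ((c - f x) / (f y - f x)) • y ∈ openSegment ℝ x y :=
    ⟨_, _, div_pos (by linarith) hd, div_pos (by linarith) hd, by field_simp; ring, rfl⟩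
  set m := ((f y - c) / (f y - f x)) • x + ((c - f x) / (f y - f x)) • y with hm
  have hmQ : m ∈ Q := hQ.segment_subset hx hy (openSegment_subset_segment _ _ _ hseg)
  have hfm : f m = c := by
    rw [hm]; simp only [map_add, map_smul, smul_eq_mul]; field_simp; ring
  have hmG := mem_of_span hne hc hex hmQ (hspan m hmQ hfm)
  have := hG x (hex.2 hx hy hmG hseg)
  linarith

lemma poly_compact {P : Set E3} (hP : IsPolytope P) : IsCompact P := by
  obtain ⟨V, rfl⟩ := hP
  exact V.finite_toSet.isCompact_convexHull ℝ

lemma poly_convex {P : Set E3} (hP : IsPolytope P) : Convex ℝ P := by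
  obtain ⟨V, rfl⟩ := hP
  exact convex_convexHull ℝ _

lemma ext_finite {P : Set E3} (hP : IsPolytope P) : (P.extremePoints ℝ).Finite := by
  obtain ⟨V, rfl⟩ := hP
  exact V.finite_toSet.subset extremePoints_convexHull_subset

lemma vertex_iff {P : Set E3} {v : E3} : IsVertexOf v P ↔ v ∈ P.extremePoints ℝ := by
  unfold IsVertexOf IsFaceOf
  simp [isExtreme_singleton, convex_singleton]

lemma face_self {P : Set E3} (hP : IsPolytope P) (hne : P.Nonempty) : IsFaceOf P P :=
  ⟨hne, (poly_compact hP).isClosed, poly_convex hP, IsExtreme.rfl⟩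

lemma face_hull {P G : Set E3} (hP : IsPolytope P) (hG : IsFaceOf G P) :
    G = convexHull ℝ (P.extremePoints ℝ ∩ G) := by
  have hGc : IsCompact G := (poly_compact hP).of_isClosed_subset hG.2.1 hG.2.2.2.1
  have h := closure_convexHull_extremePoints hGc hG.2.2.1
  rw [hG.2.2.2.extremePoints_eq, inter_comm] at h
  rw [IsClosed.closure_eq] at h
  · exact h.symm
  · exact (((ext_finite hP).inter_of_left _).isCompact_convexHull ℝ).isClosed

lemma face_vertex {P G : Set E3} (hP : IsPolytope P) (hG : IsFaceOf G P) :
    ∃ v ∈ P.extremePoints ℝ, v ∈ G := by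
  have h := face_hull hP hG
  have hne := hG.1
  rw [h, convexHull_nonempty_iff] at hne
  obtain ⟨v, hv⟩ := hne
  exact ⟨v, hv.1, hv.2⟩

lemma face_inter {P G H : Set E3} (hG : IsFaceOf G P) (hH : IsFaceOf H P)
    (hne : (G ∩ H).Nonempty) : IsFaceOf (G ∩ H) P :=
  ⟨hne, hG.2.1.inter hH.2.1, hG.2.2.1.inter hH.2.2.1, hG.2.2.2.inter hH.2.2.2⟩

lemma face_trans {P G H : Set E3} (hG : IsFaceOf G P) (hH : IsFaceOf H G) : IsFaceOf H P :=
  ⟨hH.1, hH.2.1, hH.2.2.1, hG.2.2.2.trans hH.2.2.2⟩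

lemma face_of_subset {P G H : Set E3} (hG : IsFaceOf G P) (hH : IsFaceOf H P) (h : H ⊆ G) :
    IsFaceOf H G :=
  ⟨hH.1, hH.2.1, hH.2.2.1, hH.2.2.2.mono hG.2.2.2.1 h⟩

lemma exposed_face {P : Set E3} (hcl : IsClosed P) (hc : Convex ℝ P) (f : E3 →ₗ[ℝ] ℝ) (c : ℝ)
    (hf : ∀ x ∈ P, c ≤ f x) (hne : ∃ x ∈ P, f x = c) : IsFaceOf {x ∈ P | f x = c} P := by
  obtain ⟨x0, hx0⟩ := hne
  have hcont : Continuous f := f.continuous_of_finiteDimensional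
  refine ⟨⟨x0, hx0⟩, hcl.inter (isClosed_eq hcont continuous_const), ?_, ?_⟩
  · intro x hx y hy a b ha hb hab
    refine ⟨hc hx.1 hy.1 ha hb hab, ?_⟩
    simp only [map_add, map_smul, smul_eq_mul, hx.2, hy.2]
    rw [← add_mul, hab, one_mul]
  · refine ⟨fun x hx => hx.1, ?_⟩
    rintro x hx y hy z hz ⟨a, b, ha, hb, hab, rfl⟩
    refine ⟨hx, ?_⟩
    have h := hz.2
    simp only [map_add, map_smul, smul_eq_mul] at h
    have h1 := hf x hx
    have h2 := hf y hy
    by_contra hne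
    have h3 : c < f x := lt_of_le_of_ne h1 (Ne.symm hne)
    have h4 : a * c < a * f x := mul_lt_mul_of_pos_left h3 ha
    have h5 : b * c ≤ b * f y := mul_le_mul_of_nonneg_left h2 hb.le
    have h6 : a * c + b * c = c := by rw [← add_mul, hab, one_mul]
    linarith

lemma exists_expose {P : Set E3} (hP : IsPolytope P) {x : E3} (hx : x ∈ P.extremePoints ℝ) :
    ∃ φ : E3 →ₗ[ℝ] ℝ, ∀ y ∈ P.extremePoints ℝ, y ≠ x → φ y < φ x := by
  have hfin : (P.extremePoints ℝ \ {x}).Finite := (ext_finite hP).subset sdiff_subset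
  have hnot : x ∉ convexHull ℝ (P.extremePoints ℝ \ {x}) := by
    have h := ((poly_convex hP).mem_extremePoints_iff_mem_sdiff_convexHull_sdiff).1 hx
    intro hcon
    exact h.2 (convexHull_mono (sdiff_subset_sdiff_left extremePoints_subset) hcon)
  obtain ⟨f, u, h1, h2⟩ := geometric_hahn_banach_closed_point (convex_convexHull ℝ _)
    (hfin.isCompact_convexHull ℝ).isClosed hnot
  refine ⟨f.toLinearMap, fun y hy hne => ?_⟩
  have := h1 y (subset_convexHull ℝ _ ⟨hy, hne⟩)
  show f y < f x
  linarith

/-- Coordinates and cyclic vertex order for a facet. -/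
structure FacetData (P A : Set E3) where
  g : E3 →ₗ[ℝ] ℝ
  p : E3 →ₗ[ℝ] ℝ
  q : E3 →ₗ[ℝ] ℝ
  c : ℝ
  k : ℕ
  v : Fin k → E3
  W : Finset E3
  hinj : ∀ s, g s = 0 → p s = 0 → q s = 0 → s = 0
  gpos : ∀ x ∈ P, c ≤ g x
  gzero : ∀ x ∈ P, g x = c ↔ x ∈ A
  hW : ∀ x, x ∈ W ↔ x ∈ P.extremePoints ℝ ∧ x ∈ A
  hk : 3 ≤ k
  cyc : CycOrder p q W v

lemma finrank_E3 : Module.finrank ℝ E3 = 3 := by simp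

lemma vectorSpan_convexHull' (s : Set E3) : vectorSpan ℝ (convexHull ℝ s) = vectorSpan ℝ s := by
  rw [← direction_affineSpan, affineSpan_convexHull, direction_affineSpan]

lemma exists_facetData {P A : Set E3} (hP : IsPolytope P) (hA : IsFacetOf A P) :
    Nonempty (FacetData P A) := by
  classical
  obtain ⟨a, ha⟩ := hA.1.1
  have hdim : Module.finrank ℝ (vectorSpan ℝ A) = 2 := hA.2
  set S := vectorSpan ℝ A with hS
  have hlt : S < ⊤ := by
    rw [lt_top_iff_ne_top]
    intro h
    rw [h, finrank_top, finrank_E3] at hdim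
    omega
  obtain ⟨g0, hg0, hle⟩ := S.exists_le_ker_of_lt_top hlt
  have hker : S = LinearMap.ker g0 := by
    refine Submodule.eq_of_le_of_finrank_le hle ?_
    have : LinearMap.ker g0 < ⊤ := by
      rw [lt_top_iff_ne_top]
      intro h
      exact hg0 (LinearMap.ker_eq_top.1 h)
    have := Submodule.finrank_lt_finrank_of_lt this
    rw [finrank_top, finrank_E3] at this
    omega
  have hspan : ∀ x, g0 x = g0 a → x ∈ affineSpan ℝ A := by
    intro x hx
    rw [mem_span_iff ha, ← hS, hker, LinearMap.mem_ker, map_sub, hx, sub_self]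
  have hAc : ∀ x ∈ A, g0 x = g0 a := by
    intro x hx
    have : x - a ∈ S := vsub_mem_vectorSpan ℝ hx ha
    rw [hker, LinearMap.mem_ker, map_sub] at this
    linarith
  have hgex : ∃ g : E3 →ₗ[ℝ] ℝ, LinearMap.ker g = S ∧ ∀ x ∈ P, g a ≤ g x := by
    rcases sign_const hA.1.1 hA.1.2.2.1 (poly_convex hP) hA.1.2.2.2 g0 (g0 a) hAc
      (fun x _ h => hspan x h) with h | h
    · exact ⟨g0, hker.symm, h⟩
    · refine ⟨-g0, ?_, fun x hx => by simpa using h x hx⟩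
      rw [hker]
      ext x
      simp
  obtain ⟨g, hgk, hgpos⟩ := hgex
  have b := Module.finBasisOfFinrankEq ℝ S hdim
  obtain ⟨p, hp⟩ := LinearMap.exists_extend (b.coord 0)
  obtain ⟨q, hq⟩ := LinearMap.exists_extend (b.coord 1)
  have hinj : ∀ s, g s = 0 → p s = 0 → q s = 0 → s = 0 := by
    intro s hs hps hqs
    have hsS : s ∈ S := by rw [← hgk]; exact hs
    have h0 : b.coord 0 ⟨s, hsS⟩ = 0 := by rw [← hp]; exact hps
    have h1 : b.coord 1 ⟨s, hsS⟩ = 0 := by rw [← hq]; exact hqs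
    have : (⟨s, hsS⟩ : S) = 0 := by
      apply b.ext_elem
      intro i
      fin_cases i
      · simpa using h0
      · simpa using h1
    exact congrArg Subtype.val this
  have hgzero : ∀ x ∈ P, g x = g a ↔ x ∈ A := by
    intro x hx
    constructor
    · intro h
      refine mem_of_span hA.1.1 hA.1.2.2.1 hA.1.2.2.2 hx ?_
      rw [mem_span_iff ha, ← hS, ← hgk, LinearMap.mem_ker, map_sub, h, sub_self]
    · intro h
      have : x - a ∈ S := vsub_mem_vectorSpan ℝ h ha
      rw [← hgk, LinearMap.mem_ker, map_sub] at this
      linarith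
  have hfin : (P.extremePoints ℝ ∩ A).Finite := (ext_finite hP).inter_of_left _
  let W := hfin.toFinset
  have hW : ∀ x, x ∈ W ↔ x ∈ P.extremePoints ℝ ∧ x ∈ A := fun x => by simp [W]
  have hcard : 2 < W.card := by
    have hA' := face_hull hP hA.1
    have hd : Module.finrank ℝ (vectorSpan ℝ (W : Set E3)) = 2 := by
      have hWs : (W : Set E3) = P.extremePoints ℝ ∩ A := hfin.coe_toFinset
      rw [hWs, ← vectorSpan_convexHull', ← hA']
      exact hdim
    by_contra hcon
    rcases Nat.eq_zero_or_pos W.card with h0 | h0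
    · rw [Finset.card_eq_zero] at h0
      rw [h0, Finset.coe_empty, vectorSpan_empty, finrank_bot] at hd
      omega
    · obtain ⟨n, hn⟩ := Nat.exists_eq_succ_of_ne_zero h0.ne'
      have := finrank_vectorSpan_image_finset_le ℝ (id : E3 → E3) W hn
      rw [Finset.image_id, hd] at this
      omega
  have hWg : ∀ w ∈ W, g w = g a := fun w hw =>
    (hgzero w (extremePoints_subset ((hW w).1 hw).1)).2 ((hW w).1 hw).2
  have hexp : ∀ x ∈ W, ∃ φ : E3 →ₗ[ℝ] ℝ, ∀ y ∈ W, y ≠ x → φ y < φ x := by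
    intro x hx
    obtain ⟨φ, h⟩ := exists_expose hP ((hW x).1 hx).1
    exact ⟨φ, fun y hy => h y ((hW y).1 hy).1⟩
  obtain ⟨v, hv⟩ := polygon_order hinj hWg hexp hcard
  exact ⟨⟨g, p, q, g a, W.card, v, W, hinj, hgpos, hgzero, hW, hcard, hv⟩⟩

namespace FacetData
variable {P A : Set E3} (D : FacetData P A)

lemma Wg : ∀ w ∈ D.W, D.g w = D.c := fun w hw =>
    (D.gzero w (extremePoints_subset ((D.hW w).1 hw).1)).2 ((D.hW w).1 hw).2

lemma exposes (hP : IsPolytope P) :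
    ∀ x ∈ D.W, ∃ φ : E3 →ₗ[ℝ] ℝ, ∀ y ∈ D.W, y ≠ x → φ y < φ x := by
  intro x hx
  obtain ⟨φ, h⟩ := exists_expose hP ((D.hW x).1 hx).1
  exact ⟨φ, fun y hy => h y ((D.hW y).1 hy).1⟩

lemma hull (hP : IsPolytope P) (hA : IsFacetOf A P) : A = convexHull ℝ (D.W : Set E3) := by
  have : (D.W : Set E3) = P.extremePoints ℝ ∩ A := by
    ext x; simp [D.hW]
  rw [this]
  exact face_hull hP hA.1

lemma vW (i : Fin D.k) : D.v i ∈ D.W := cyc_mem D.cyc i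

lemma v_ext (i : Fin D.k) : D.v i ∈ P.extremePoints ℝ := ((D.hW _).1 (D.vW i)).1

lemma v_mem (i : Fin D.k) : D.v i ∈ A := ((D.hW _).1 (D.vW i)).2

/-- The linear functional of the i-th edge. -/
def u (i : Fin D.k) : E3 →ₗ[ℝ] ℝ :=
  D.p (D.v (nxt i) - D.v i) • D.q - D.q (D.v (nxt i) - D.v i) • D.p

lemma u_apply (i : Fin D.k) (x y : E3) :
    dt D.p D.q (D.v (nxt i) - D.v i) (x - y) = D.u i x - D.u i y := by
  simp [dt, u]; ring

lemma u_nonneg (hP : IsPolytope P) (hA : IsFacetOf A P) (i : Fin D.k) :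
    ∀ x ∈ A, D.u i (D.v i) ≤ D.u i x := by
  have hsub : A ⊆ {x | D.u i (D.v i) ≤ D.u i x} := by
    conv_lhs => rw [D.hull hP hA]
    refine convexHull_min ?_ (convex_halfSpace_ge (D.u i).isLinear _)
    intro y hy
    have := D.cyc.2.2 i y hy
    rw [u_apply] at this
    show D.u i (D.v i) ≤ D.u i y
    linarith
  exact hsub

lemma v_ne (i : Fin D.k) : D.v i ≠ D.v (nxt i) :=
  fun h => nxt_ne (by have := D.hk; omega) i (D.cyc.1 h.symm)

/-- The i-th edge of a facet. -/
lemma edge_eq (hP : IsPolytope P) (hA : IsFacetOf A P) (i : Fin D.k) :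
    IsFaceOf (segment ℝ (D.v i) (D.v (nxt i))) P ∧
    {x ∈ A | D.u i x = D.u i (D.v i)} = segment ℝ (D.v i) (D.v (nxt i)) := by
  have hf : IsFaceOf {x ∈ A | D.u i x = D.u i (D.v i)} A :=
    exposed_face hA.1.2.1 hA.1.2.2.1 _ _ (D.u_nonneg hP hA i) ⟨_, D.v_mem i, rfl⟩
  have hf' := face_trans hA.1 hf
  have heq : {x ∈ A | D.u i x = D.u i (D.v i)} = segment ℝ (D.v i) (D.v (nxt i)) := by
    rw [face_hull hP hf', ← convexHull_pair]
    congr 1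
    ext y
    have hz : ∀ y ∈ D.W, _ := fun y hy =>
      cyc_zero D.hinj D.Wg (D.exposes hP) D.hk D.cyc i (y := y) hy
    simp only [mem_inter_iff, mem_ofPred_eq, mem_insert_iff, mem_singleton_iff]
    constructor
    · rintro ⟨h1, h2, h3⟩
      refine (hz y ((D.hW y).2 ⟨h1, h2⟩)).1 ?_
      rw [u_apply, h3, sub_self]
    · intro h
      have hyW : y ∈ D.W := by
        rcases h with rfl | rfl
        · exact D.vW i
        · exact D.vW _
      have := (hz y hyW).2 h
      rw [u_apply] at this
      exact ⟨((D.hW y).1 hyW).1, ((D.hW y).1 hyW).2, by linarith⟩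
  exact ⟨heq ▸ hf', heq⟩

end FacetData

lemma setDim_segment {a b : E3} (h : a ≠ b) : setDim (segment ℝ a b) = 1 := by
  unfold setDim
  rw [← convexHull_pair, vectorSpan_convexHull', vectorSpan_pair]
  apply finrank_span_singleton
  simpa [sub_eq_zero] using h

namespace FacetData
variable {P A : Set E3} (D : FacetData P A)

lemma edge (hP : IsPolytope P) (hA : IsFacetOf A P) (i : Fin D.k) :
    IsEdgeOf (segment ℝ (D.v i) (D.v (nxt i))) P :=
  ⟨(D.edge_eq hP hA i).1, setDim_segment (D.v_ne i)⟩

lemma edge_sub (hA : IsFacetOf A P) (i : Fin D.k) :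
    segment ℝ (D.v i) (D.v (nxt i)) ⊆ A :=
  hA.1.2.2.1.segment_subset (D.v_mem i) (D.v_mem _)

/-- H-representation of a facet. -/
lemma hrep (hP : IsPolytope P) (hA : IsFacetOf A P) {x : E3} (hx : D.g x = D.c)
    (hu : ∀ i, D.u i (D.v i) ≤ D.u i x) : x ∈ A := by
  by_contra hxA
  obtain ⟨f, t, h1, h2⟩ := geometric_hahn_banach_point_closed hA.1.2.2.1 hA.1.2.1 hxA
  have hk := D.hk
  obtain ⟨i, -, hi⟩ := Finset.exists_min_image (Finset.univ : Finset (Fin D.k))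
    (fun i => f (D.v i)) ⟨⟨0, by omega⟩, Finset.mem_univ _⟩
  obtain ⟨α, β, hα, hβ, h⟩ := cyc_cone D.hinj D.Wg (D.exposes hP) D.hk D.cyc i hx
    (fun i => by rw [u_apply]; linarith [hu i])
  have h3 := congrArg f h
  simp only [map_add, map_smul, map_sub, smul_eq_mul] at h3
  have h4 := hi (nxt i) (Finset.mem_univ _)
  have h5 := hi (prv i) (Finset.mem_univ _)
  have h6 := h2 _ (D.v_mem i)
  have h7 : 0 ≤ α * (f (D.v (nxt i)) - f (D.v i)) := mul_nonneg hα (by linarith)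
  have h8 : 0 ≤ β * (f (D.v (prv i)) - f (D.v i)) := mul_nonneg hβ (by linarith)
  linarith

end FacetData

lemma facet_ne_all {P A : Set E3} (hP : IsPolytope P) (hd : setDim P = 3) (hA : IsFacetOf A P) :
    ∃ w ∈ P.extremePoints ℝ, w ∉ A := by
  by_contra! hcon
  have hne : P.Nonempty := hA.1.1.mono hA.1.2.2.2.1
  have h := face_hull hP (face_self hP hne)
  have hsub : P ⊆ A := by
    rw [h]
    exact convexHull_min (fun x hx => hcon x hx.1) hA.1.2.2.1
  have := setDim_mono hsub
  have := hA.2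
  omega

lemma setDim_le_two {C : Set E3} (f : E3 →ₗ[ℝ] ℝ) (hf : f ≠ 0) (c : ℝ) (h : ∀ x ∈ C, f x = c) :
    setDim C ≤ 2 := by
  have hle : vectorSpan ℝ C ≤ LinearMap.ker f := by
    rw [vectorSpan_def, Submodule.span_le]
    rintro _ ⟨x, hx, y, hy, rfl⟩
    simp [h x hx, h y hy]
  have hlt : LinearMap.ker f < ⊤ := by
    rw [lt_top_iff_ne_top]
    intro h
    exact hf (LinearMap.ker_eq_top.1 h)
  have h1 := Submodule.finrank_lt_finrank_of_lt hlt
  rw [finrank_top, finrank_E3] at h1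
  have h2 := Submodule.finrank_mono hle
  unfold setDim
  omega

lemma facet_second {P A : Set E3} (hP : IsPolytope P) (hd : setDim P = 3) (hA : IsFacetOf A P)
    (D : FacetData P A) (i : Fin D.k) :
    ∃ C, IsFacetOf C P ∧ C ≠ A ∧ segment ℝ (D.v i) (D.v (nxt i)) ⊆ C := by
  classical
  have hfin : (P.extremePoints ℝ \ A).Finite := (ext_finite hP).subset sdiff_subset
  obtain ⟨w0, hw0, hw0A⟩ := facet_ne_all hP hd hA
  obtain ⟨w, hw, hmax⟩ := Finset.exists_max_image hfin.toFinset
    (fun w => (D.u i (D.v i) - D.u i w) / (D.g w - D.c)) ⟨w0, by simp [hw0, hw0A]⟩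
  simp only [Finite.mem_toFinset, mem_sdiff] at hw hmax
  set t := (D.u i (D.v i) - D.u i w) / (D.g w - D.c) with ht
  have hgp : ∀ y ∈ P.extremePoints ℝ, y ∉ A → 0 < D.g y - D.c := by
    intro y hy hyA
    have hyP := extremePoints_subset hy
    have h1 := D.gpos y hyP
    have h2 : D.g y ≠ D.c := fun h => hyA ((D.gzero y hyP).1 h)
    exact sub_pos.2 (lt_of_le_of_ne h1 h2.symm)
  set h : E3 →ₗ[ℝ] ℝ := D.u i + t • D.g with hh
  have happ : ∀ x, h x = D.u i x + t * D.g x := fun x => by simp [hh]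
  set h0 := D.u i (D.v i) + t * D.c with hh0
  have hne : P.Nonempty := hA.1.1.mono hA.1.2.2.2.1
  have hgA : ∀ y ∈ A, D.g y = D.c := fun y hy => (D.gzero y (hA.1.2.2.2.1 hy)).2 hy
  have hpos : ∀ x ∈ P, h0 ≤ h x := by
    have hsub : P ⊆ {x | h0 ≤ h x} := by
      rw [face_hull hP (face_self hP hne)]
      refine convexHull_min ?_ (convex_halfSpace_ge h.isLinear _)
      rintro y ⟨hy, -⟩
      show h0 ≤ h y
      rw [happ, hh0]
      by_cases hyA : y ∈ A
      · rw [hgA y hyA]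
        linarith [D.u_nonneg hP hA i y hyA]
      · have h1 := hmax y ⟨hy, hyA⟩
        rw [div_le_iff₀ (hgp y hy hyA)] at h1
        linarith
    exact hsub
  have hvi : h (D.v i) = h0 := by rw [happ, hgA _ (D.v_mem i)]
  have hz := D.edge_eq hP hA i
  have hvn : h (D.v (nxt i)) = h0 := by
    have : D.v (nxt i) ∈ segment ℝ (D.v i) (D.v (nxt i)) := right_mem_segment _ _ _
    rw [← hz.2] at this
    rw [happ, hgA _ (D.v_mem _), this.2]
  have hwh : h w = h0 := by
    have h1 := hgp w hw.1 hw.2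
    have h2 : t * (D.g w - D.c) = D.u i (D.v i) - D.u i w := by
      rw [ht, div_mul_cancel₀ _ h1.ne']
    rw [happ, hh0]
    linarith
  have hface := exposed_face (poly_compact hP).isClosed (poly_convex hP) h h0 hpos
    ⟨_, hA.1.2.2.2.1 (D.v_mem i), hvi⟩
  set C := {x ∈ P | h x = h0} with hC
  have hwC : w ∈ C := ⟨extremePoints_subset hw.1, hwh⟩
  have hseg : segment ℝ (D.v i) (D.v (nxt i)) ⊆ C :=
    hface.2.2.1.segment_subset ⟨hA.1.2.2.2.1 (D.v_mem i), hvi⟩ ⟨hA.1.2.2.2.1 (D.v_mem _), hvn⟩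
  have hh_ne : h ≠ 0 := by
    intro h00
    have hz3 := (cyc_zero D.hinj D.Wg (D.exposes hP) D.hk D.cyc i (D.vW (nxt (nxt i)))).1
    have hk := D.hk
    have h1 : h (D.v (nxt (nxt i))) = h (D.v i) := by rw [h00]; simp
    rw [happ, happ, hgA _ (D.v_mem _), hgA _ (D.v_mem _)] at h1
    rw [D.u_apply] at hz3
    rcases hz3 (by linarith) with h2 | h2
    · exact nxt_nxt_ne hk i (D.cyc.1 h2)
    · exact nxt_ne (by omega) _ (D.cyc.1 h2)
  refine ⟨C, ⟨hface, ?_⟩, ?_, hseg⟩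
  · have h1 : setDim C ≤ 2 := setDim_le_two h hh_ne h0 (fun x hx => hx.2)
    by_contra h2
    have h3 : setDim C ≤ setDim (segment ℝ (D.v i) (D.v (nxt i))) := by
      rw [setDim_segment (D.v_ne i)]; omega
    have h4 := face_of_subset hface hz.1 hseg
    have h5 := eq_of_dim h4.1 h4.2.2.1 h4.2.2.2 h3
    rw [← h5] at hwC
    exact hw.2 (D.edge_sub hA i hwC)
  · intro hCA
    rw [hCA] at hwC
    exact hw.2 hwC

lemma facet_sub_eq {P A C : Set E3} (hA : IsFacetOf A P) (hC : IsFacetOf C P) (h : A ⊆ C) :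
    A = C := by
  have h1 := face_of_subset hC.1 hA.1 h
  exact eq_of_dim h1.1 h1.2.2.1 h1.2.2.2 (by rw [hA.2, hC.2])

lemma facet_inter_edge {P A C e : Set E3} (hA : IsFacetOf A P) (hC : IsFacetOf C P)
    (hne : A ≠ C) (he : IsEdgeOf e P) (heA : e ⊆ A) (heC : e ⊆ C) : A ∩ C = e := by
  have hsub : e ⊆ A ∩ C := subset_inter heA heC
  have hf := face_inter hA.1 hC.1 (he.1.1.mono hsub)
  have h1 := face_of_subset hf he.1 hsub
  by_cases hd : setDim (A ∩ C) ≤ 1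
  · exact (eq_of_dim h1.1 h1.2.2.1 h1.2.2.2 (by rw [he.2]; exact hd)).symm
  · exfalso
    have h2 := face_of_subset hA.1 hf inter_subset_left
    have h3 := eq_of_dim h2.1 h2.2.2.1 h2.2.2.2 (by rw [hA.2]; omega)
    exact hne (facet_sub_eq hA hC (inter_eq_left.1 h3))

lemma ext_segment {P : Set E3} {a b x : E3} (ha : a ∈ P) (hb : b ∈ P)
    (hx : x ∈ P.extremePoints ℝ) (h : x ∈ segment ℝ a b) : x = a ∨ x = b := by
  have := (mem_extremePoints_iff_forall_segment.1 hx).2 a ha b hb h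
  rcases this with h | h
  · exact Or.inl h.symm
  · exact Or.inr h.symm

namespace FacetData
variable {P A : Set E3} (D : FacetData P A)

lemma edge_vertex (hA : IsFacetOf A P) (i : Fin D.k) {x : E3} (hx : x ∈ P.extremePoints ℝ)
    (h : x ∈ segment ℝ (D.v i) (D.v (nxt i))) : x = D.v i ∨ x = D.v (nxt i) :=
  ext_segment (hA.1.2.2.2.1 (D.v_mem i)) (hA.1.2.2.2.1 (D.v_mem _)) hx h

lemma vertex_index {x : E3} (hx : x ∈ P.extremePoints ℝ) (hxA : x ∈ A) : ∃ i, D.v i = x :=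
  (D.cyc.2.1 x).1 ((D.hW x).2 ⟨hx, hxA⟩)

lemma edge_inj (hA : IsFacetOf A P) {i j : Fin D.k}
    (h : segment ℝ (D.v i) (D.v (nxt i)) = segment ℝ (D.v j) (D.v (nxt j))) : i = j := by
  have h1 := D.edge_vertex hA j (D.v_ext i) (h ▸ left_mem_segment _ _ _)
  have h2 := D.edge_vertex hA j (D.v_ext (nxt i)) (h ▸ right_mem_segment _ _ _)
  rcases h1 with h1 | h1
  · exact D.cyc.1 h1
  · have e1 := D.cyc.1 h1
    rcases h2 with h2 | h2
    · have e2 := D.cyc.1 h2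
      rw [e1] at e2
      exact absurd e2 (nxt_nxt_ne D.hk j)
    · exact nxt_inj (D.cyc.1 h2)

lemma edge_classify (hP : IsPolytope P) (hA : IsFacetOf A P) {e : Set E3} (he : IsEdgeOf e P)
    (heA : e ⊆ A) : ∃ i, e = segment ℝ (D.v i) (D.v (nxt i)) := by
  have heA' := face_of_subset hA.1 he.1 heA
  have hhull := face_hull hP he.1
  -- two distinct vertices
  have htwo : ∃ a b, a ≠ b ∧ a ∈ P.extremePoints ℝ ∩ e ∧ b ∈ P.extremePoints ℝ ∩ e := by
    by_contra! hcon
    have hss : (P.extremePoints ℝ ∩ e).Subsingleton := by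
      intro a ha b hb
      by_contra hab
      exact hcon a b hab ha hb
    have h1 := he.2
    unfold setDim at h1
    rw [hhull, vectorSpan_convexHull', (vectorSpan_eq_bot_iff_subsingleton ℝ).2 hss, finrank_bot] at h1
    omega
  obtain ⟨a, b, hab, ⟨ha, hae⟩, hb, hbe⟩ := htwo
  obtain ⟨i, rfl⟩ := D.vertex_index ha (heA hae)
  have hij : ∀ j, D.v j ∈ e → D.v (nxt j) ∈ e → e = segment ℝ (D.v j) (D.v (nxt j)) := by
    intro j h1 h2
    have hsub := he.1.2.2.1.segment_subset h1 h2
    have h3 := face_of_subset he.1 (D.edge hP hA j).1 hsub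
    exact (eq_of_dim h3.1 h3.2.2.1 h3.2.2.2 (by rw [he.2, (D.edge hP hA j).2])).symm
  obtain ⟨j, rfl⟩ := D.vertex_index hb (heA hbe)
  -- the functional of the line through a and b
  set f : E3 →ₗ[ℝ] ℝ := D.p (D.v j - D.v i) • D.q - D.q (D.v j - D.v i) • D.p with hf
  have fdt : ∀ x, dt D.p D.q (D.v j - D.v i) (x - D.v i) = f x - f (D.v i) := by
    intro x; simp [hf, dt]; ring
  have hzero : ∀ x, D.g x = D.c → f x = f (D.v i) → x ∈ affineSpan ℝ e := by
    intro x hx hfx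
    have hdt := fdt x
    rw [hfx, sub_self] at hdt
    set b := D.v j - D.v i with hb'
    set s := x - D.v i with hs'
    have gb : D.g b = 0 := by rw [hb', map_sub, D.Wg _ (D.vW _), D.Wg _ (D.vW _), sub_self]
    have gs : D.g s = 0 := by rw [hs', map_sub, hx, D.Wg _ (D.vW _), sub_self]
    have hN : D.p b ^ 2 + D.q b ^ 2 ≠ 0 := by
      intro h
      have h1 : D.p b = 0 := by nlinarith [sq_nonneg (D.p b), sq_nonneg (D.q b)]
      have h2 : D.q b = 0 := by nlinarith [sq_nonneg (D.p b), sq_nonneg (D.q b)]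
      exact hab (sub_eq_zero.1 (D.hinj b gb h1 h2)).symm
    unfold dt at hdt
    have hst : s = ((D.p b * D.p s + D.q b * D.q s) / (D.p b ^ 2 + D.q b ^ 2)) • b := by
      rw [← sub_eq_zero]
      apply D.hinj
      · simp [gb, gs]
      · simp only [map_sub, map_smul, smul_eq_mul]
        field_simp
        linear_combination (-D.q b) * hdt
      · simp only [map_sub, map_smul, smul_eq_mul]
        field_simp
        linear_combination (D.p b) * hdt
    rw [mem_span_iff hae, ← hs', hst]
    exact Submodule.smul_mem _ _ (vsub_mem_vectorSpan ℝ hbe hae)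
  have hG : ∀ x ∈ e, f x = f (D.v i) := by
    intro x hx
    have hsub := he.1.2.2.1.segment_subset hbe hae
    have hle := vectorSpan_mono ℝ hsub
    have heq := Submodule.eq_of_le_of_finrank_le hle
      (le_of_eq (he.2.trans (setDim_segment (Ne.symm hab)).symm))
    have hm : x - D.v i ∈ vectorSpan ℝ e := vsub_mem_vectorSpan ℝ hx hae
    rw [← heq, ← convexHull_pair, vectorSpan_convexHull', vectorSpan_pair,
      Submodule.mem_span_singleton] at hm
    obtain ⟨t, ht⟩ := hm
    have h1 := fdt x
    rw [← ht] at h1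
    have h2 : dt D.p D.q (D.v j - D.v i) (t • (D.v j -ᵥ D.v i)) = 0 := by
      simp [dt]; ring
    linarith
  have hz := fun i y hy => (cyc_zero D.hinj D.Wg (D.exposes hP) D.hk D.cyc i (y := y) hy).1
  rcases sign_const he.1.1 he.1.2.2.1 hA.1.2.2.1 heA'.2.2.2 f (f (D.v i)) hG
    (fun x hx h => hzero x ((D.gzero x (hA.1.2.2.2.1 hx)).2 hx) h) with h | h
  · have h1 := h _ (D.v_mem (nxt i))
    have h2 := D.cyc.2.2 i _ (D.vW j)
    have h3 := fdt (D.v (nxt i))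
    have h4 : dt D.p D.q (D.v (nxt i) - D.v i) (D.v j - D.v i) = 0 := by
      unfold dt at *; linarith
    rcases hz i _ (D.vW j) h4 with h5 | h5
    · exact absurd h5.symm hab
    · exact ⟨i, hij i hae (h5 ▸ hbe)⟩
  · have h1 := h _ (D.v_mem (nxt j))
    have h2 := D.cyc.2.2 j _ (D.vW i)
    have h3 := fdt (D.v (nxt j))
    have h4 : dt D.p D.q (D.v (nxt j) - D.v j) (D.v i - D.v j) = 0 := by
      simp only [dt, map_sub] at *; linarith
    rcases hz j _ (D.vW i) h4 with h5 | h5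
    · exact absurd h5 hab
    · exact ⟨j, hij j hbe (h5 ▸ hae)⟩

lemma facetEdges_eq (hP : IsPolytope P) (hA : IsFacetOf A P) : facetEdges P A = D.k := by
  unfold facetEdges
  have : {e | IsEdgeOf e P ∧ e ⊆ A} = range (fun i => segment ℝ (D.v i) (D.v (nxt i))) := by
    ext e
    constructor
    · rintro ⟨h1, h2⟩
      obtain ⟨i, hi⟩ := D.edge_classify hP hA h1 h2
      exact ⟨i, hi.symm⟩
    · rintro ⟨i, rfl⟩
      exact ⟨D.edge hP hA i, D.edge_sub hA i⟩
  rw [this, ← image_univ, ncard_image_of_injective _ (fun i j h => D.edge_inj hA h), ncard_univ]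
  simp

end FacetData

lemma simple_three {P A B C : Set E3} (hP : IsSimplePolytope3 P) {w : E3}
    (hw : w ∈ P.extremePoints ℝ) (hA : IsFacetOf A P) (hB : IsFacetOf B P) (hC : IsFacetOf C P)
    (hwA : w ∈ A) (hwB : w ∈ B) (hwC : w ∈ C) (hAB : A ≠ B) (hAC : A ≠ C) (hBC : B ≠ C)
    {X : Set E3} (hX : IsFacetOf X P) (hwX : w ∈ X) : X = A ∨ X = B ∨ X = C := by
  have h3 := hP.2.2 w (vertex_iff.2 hw)
  have hsub : ({A, B, C} : Set (Set E3)) ⊆ {F | IsFacetOf F P ∧ w ∈ F} := by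
    rintro Y (rfl | rfl | rfl)
    exacts [⟨hA, hwA⟩, ⟨hB, hwB⟩, ⟨hC, hwC⟩]
  have hc : ({A, B, C} : Set (Set E3)).ncard = 3 := by
    rw [ncard_eq_three]; exact ⟨A, B, C, hAB, hAC, hBC, rfl⟩
  have heq := eq_of_subset_of_ncard_le hsub (by rw [h3, hc])
    (finite_of_ncard_ne_zero (by rw [h3]; norm_num))
  have : X ∈ ({A, B, C} : Set (Set E3)) := by rw [heq]; exact ⟨hX, hwX⟩
  simpa using this

lemma facets_meet {P A B : Set E3} (hP : IsSimplePolytope3 P) (hA : IsFacetOf A P)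
    (hB : IsFacetOf B P) (hAB : A ≠ B) (hne : (A ∩ B).Nonempty) : IsEdgeOf (A ∩ B) P := by
  obtain ⟨w, hw, hwA, hwB⟩ := face_vertex hP.1 (face_inter hA.1 hB.1 hne)
  obtain ⟨D⟩ := exists_facetData hP.1 hA
  obtain ⟨i, rfl⟩ := D.vertex_index hw hwA
  obtain ⟨C, hC, hCA, hCe⟩ := facet_second hP.1 hP.2.1 hA D i
  obtain ⟨C', hC', hCA', hCe'⟩ := facet_second hP.1 hP.2.1 hA D (prv i)
  have e1 := facet_inter_edge hA hC hCA.symm (D.edge hP.1 hA i) (D.edge_sub hA i) hCe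
  have e2 := facet_inter_edge hA hC' hCA'.symm (D.edge hP.1 hA _) (D.edge_sub hA _) hCe'
  have hk := D.hk
  have hCC : C ≠ C' := by
    rintro rfl
    have := D.edge_inj hA (e1.symm.trans e2)
    exact nxt_ne (by omega) (prv i) (by rw [nxt_prv, ← this])
  have hw1 : D.v i ∈ C := hCe (left_mem_segment _ _ _)
  have hw2 : D.v i ∈ C' := hCe' (by rw [nxt_prv]; exact right_mem_segment _ _ _)
  rcases simple_three hP hw hA hC hC' hwA hw1 hw2 hCA.symm hCA'.symm hCC hB hwB with h | h | h
  · exact absurd h.symm hAB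
  · rw [h, e1]; exact D.edge hP.1 hA i
  · rw [h, e2]; exact D.edge hP.1 hA _

lemma tetra {P : Set E3} {w a b d : E3} (fa fb fd f : E3 →ₗ[ℝ] ℝ) (ca cb cd c : ℝ)
    (ha : ∀ x ∈ P, ca ≤ fa x) (hb : ∀ x ∈ P, cb ≤ fb x) (hd : ∀ x ∈ P, cd ≤ fd x)
    (h : ∀ x ∈ P, c ≤ f x)
    (haw : fa w = ca) (hbw : fb w = cb) (hdw : fd w = cd) (hw : c < f w)
    (haa : ca < fa a) (hba : fb a = cb) (hda : fd a = cd) (hfa : f a = c)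
    (hab : fa b = ca) (hbb : cb < fb b) (hdb : fd b = cd) (hfb : f b = c)
    (had : fa d = ca) (hbd : fb d = cb) (hdd : cd < fd d) (hfd : f d = c) :
    P ⊆ convexHull ℝ {w, a, b, d} := by
  have hli : LinearIndependent ℝ ![a - w, b - w, d - w] := by
    rw [Fintype.linearIndependent_iff]
    intro g hg
    simp only [Fin.sum_univ_three, Matrix.cons_val_zero, Matrix.cons_val_one,
      Matrix.cons_val] at hg
    have h1 := congrArg fa hg
    have h2 := congrArg fb hg
    have h3 := congrArg fd hg
    simp only [map_add, map_smul, map_sub, smul_eq_mul, map_zero, haw, hbw, hdw, hba, hda, hab,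
      hdb, had, hbd, sub_self, mul_zero, add_zero, zero_add, mul_eq_zero] at h1 h2 h3
    intro i
    fin_cases i
    · exact h1.resolve_right (by linarith)
    · exact h2.resolve_right (by linarith)
    · exact h3.resolve_right (by linarith)
  have hspan := hli.span_eq_top_of_card_eq_finrank (by simp)
  intro x hx
  have hm : x - w ∈ Submodule.span ℝ (range ![a - w, b - w, d - w]) := by rw [hspan]; trivial
  rw [Submodule.mem_span_range_iff_exists_fun] at hm
  obtain ⟨g, hg⟩ := hm
  simp only [Fin.sum_univ_three, Matrix.cons_val_zero, Matrix.cons_val_one,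
      Matrix.cons_val] at hg
  have h1 := congrArg fa hg
  have h2 := congrArg fb hg
  have h3 := congrArg fd hg
  have h4 := congrArg f hg
  simp only [map_add, map_smul, map_sub, smul_eq_mul, haw, hbw, hdw, hba, hda, hab,
      hdb, had, hbd, hfa, hfb, hfd, sub_self, mul_zero, add_zero, zero_add] at h1 h2 h3 h4
  have p0 : 0 ≤ g 0 := by
    by_contra hc; nlinarith [ha x hx]
  have p1 : 0 ≤ g 1 := by
    by_contra hc; nlinarith [hb x hx]
  have p2 : 0 ≤ g 2 := by
    by_contra hc; nlinarith [hd x hx]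
  have p3 : 0 ≤ 1 - g 0 - g 1 - g 2 := by
    by_contra hc; nlinarith [h x hx]
  have hC := convex_convexHull ℝ ({w, a, b, d} : Set E3)
  have hs := subset_convexHull ℝ ({w, a, b, d} : Set E3)
  have hx' : x = ∑ i : Fin 4, ![1 - g 0 - g 1 - g 2, g 0, g 1, g 2] i • ![w, a, b, d] i := by
    simp only [Fin.sum_univ_four, Matrix.cons_val_zero, Matrix.cons_val_one,
      Matrix.cons_val]
    rw [eq_add_of_sub_eq hg.symm]; module
  rw [hx']
  refine hC.sum_mem ?_ ?_ ?_
  · intro i _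
    fin_cases i <;> simp [p0, p1, p2] <;> linarith
  · simp [Fin.sum_univ_four]; ring
  · intro i _
    apply hs
    fin_cases i <;> simp

lemma four_facets {P F A B C : Set E3} (hP : IsSimplePolytope3 P) (hF : IsFacetOf F P)
    (hA : IsFacetOf A P) (hB : IsFacetOf B P) (hC : IsFacetOf C P)
    (hFA : F ≠ A) (hFB : F ≠ B) (hFC : F ≠ C) (hAB : A ≠ B) (hAC : A ≠ C) (hBC : B ≠ C)
    {w a b d : E3} (hw : w ∈ P.extremePoints ℝ) (ha : a ∈ P.extremePoints ℝ)
    (hb : b ∈ P.extremePoints ℝ) (hd : d ∈ P.extremePoints ℝ)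
    (wA : w ∈ A) (wB : w ∈ B) (wC : w ∈ C) (aF : a ∈ F) (aB : a ∈ B) (aC : a ∈ C)
    (bF : b ∈ F) (bA : b ∈ A) (bC : b ∈ C) (dF : d ∈ F) (dA : d ∈ A) (dB : d ∈ B) :
    (facets P).ncard = 4 := by
  have atw : ∀ X, IsFacetOf X P → w ∈ X → X = A ∨ X = B ∨ X = C := fun X hX hwX =>
    simple_three hP hw hA hB hC wA wB wC hAB hAC hBC hX hwX
  have ata : ∀ X, IsFacetOf X P → a ∈ X → X = F ∨ X = B ∨ X = C := fun X hX hwX =>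
    simple_three hP ha hF hB hC aF aB aC hFB hFC hBC hX hwX
  have atb : ∀ X, IsFacetOf X P → b ∈ X → X = F ∨ X = A ∨ X = C := fun X hX hwX =>
    simple_three hP hb hF hA hC bF bA bC hFA hFC hAC hX hwX
  have atd : ∀ X, IsFacetOf X P → d ∈ X → X = F ∨ X = A ∨ X = B := fun X hX hwX =>
    simple_three hP hd hF hA hB dF dA dB hFA hFB hAB hX hwX
  have nw : w ∉ F := fun h => by
    rcases atw F hF h with h | h | h
    exacts [hFA h, hFB h, hFC h]
  have na : a ∉ A := fun h => by
    rcases ata A hA h with h | h | h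
    exacts [hFA h.symm, hAB h, hAC h]
  have nb : b ∉ B := fun h => by
    rcases atb B hB h with h | h | h
    exacts [hFB h.symm, hAB h.symm, hBC h]
  have nd : d ∉ C := fun h => by
    rcases atd C hC h with h | h | h
    exacts [hFC h.symm, hAC h.symm, hBC h.symm]
  obtain ⟨DF⟩ := exists_facetData hP.1 hF
  obtain ⟨DA⟩ := exists_facetData hP.1 hA
  obtain ⟨DB⟩ := exists_facetData hP.1 hB
  obtain ⟨DC⟩ := exists_facetData hP.1 hC
  have hz : ∀ {X : Set E3} (D : FacetData P X) {x : E3}, x ∈ P.extremePoints ℝ → x ∈ X →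
      D.g x = D.c := fun D x hx h => (D.gzero x (extremePoints_subset hx)).2 h
  have hp : ∀ {X : Set E3} (D : FacetData P X) {x : E3}, x ∈ P.extremePoints ℝ → x ∉ X →
      D.c < D.g x := fun D x hx h => lt_of_le_of_ne (D.gpos x (extremePoints_subset hx))
        (fun h' => h ((D.gzero x (extremePoints_subset hx)).1 h'.symm))
  have hsub : P ⊆ convexHull ℝ {w, a, b, d} :=
    tetra DA.g DB.g DC.g DF.g DA.c DB.c DC.c DF.c DA.gpos DB.gpos DC.gpos DF.gpos
      (hz DA hw wA) (hz DB hw wB) (hz DC hw wC) (hp DF hw nw)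
      (hp DA ha na) (hz DB ha aB) (hz DC ha aC) (hz DF ha aF)
      (hz DA hb bA) (hp DB hb nb) (hz DC hb bC) (hz DF hb bF)
      (hz DA hd dA) (hz DB hd dB) (hp DC hd nd) (hz DF hd dF)
  have hPeq : P = convexHull ℝ {w, a, b, d} := by
    refine subset_antisymm hsub (convexHull_min ?_ (poly_convex hP.1))
    rintro x (rfl | rfl | rfl | rfl)
    exacts [extremePoints_subset hw, extremePoints_subset ha, extremePoints_subset hb,
      extremePoints_subset hd]
  have hext : P.extremePoints ℝ ⊆ {w, a, b, d} := by
    rw [hPeq]; exact extremePoints_convexHull_subset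
  have hfac : facets P = {F, A, B, C} := by
    ext X
    constructor
    · intro hX
      obtain ⟨x, hx, hxX⟩ := face_vertex hP.1 hX.1
      have := hext hx
      simp only [mem_insert_iff, mem_singleton_iff] at this ⊢
      rcases this with rfl | rfl | rfl | rfl
      · have := atw X hX hxX; tauto
      · have := ata X hX hxX; tauto
      · have := atb X hX hxX; tauto
      · have := atd X hX hxX; tauto
    · rintro (rfl | rfl | rfl | rfl) <;> assumption
  rw [hfac, ncard_insert_of_notMem (by simp [hFA, hFB, hFC]),
    ncard_eq_three.2 ⟨A, B, C, hAB, hAC, hBC, rfl⟩]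

/-- The ring of facets around a facet. -/
structure RingData (P F : Set E3) where
  D : FacetData P F
  L : Fin D.k → Set E3
  hL : ∀ i, IsFacetOf (L i) P
  hne : ∀ i, L i ≠ F
  hsub : ∀ i, segment ℝ (D.v i) (D.v (nxt i)) ⊆ L i

lemma exists_ring {P F : Set E3} (hP : IsSimplePolytope3 P) (hF : IsFacetOf F P) :
    Nonempty (RingData P F) := by
  obtain ⟨D⟩ := exists_facetData hP.1 hF
  choose L h1 h2 h3 using facet_second hP.1 hP.2.1 hF D
  exact ⟨⟨D, L, h1, h2, h3⟩⟩

namespace RingData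
variable {P F : Set E3} (R : RingData P F)

lemma inter_F (hP : IsSimplePolytope3 P) (hF : IsFacetOf F P) (i : Fin R.D.k) :
    F ∩ R.L i = segment ℝ (R.D.v i) (R.D.v (nxt i)) :=
  facet_inter_edge hF (R.hL i) (R.hne i).symm (R.D.edge hP.1 hF i) (R.D.edge_sub hF i) (R.hsub i)

lemma inj (hP : IsSimplePolytope3 P) (hF : IsFacetOf F P) : Function.Injective R.L := by
  intro i j h
  apply R.D.edge_inj hF
  rw [← R.inter_F hP hF, ← R.inter_F hP hF, h]

lemma vl (i : Fin R.D.k) : R.D.v i ∈ R.L i := R.hsub i (left_mem_segment _ _ _)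
lemma vr (i : Fin R.D.k) : R.D.v (nxt i) ∈ R.L i := R.hsub i (right_mem_segment _ _ _)

lemma edge (hP : IsSimplePolytope3 P) (hF : IsFacetOf F P) (i : Fin R.D.k) :
    IsEdgeOf (R.L i ∩ R.L (nxt i)) P := by
  have hk := R.D.hk
  refine facets_meet hP (R.hL i) (R.hL _) ?_ ⟨_, R.vr i, R.vl _⟩
  intro h
  exact nxt_ne (by omega) i (R.inj hP hF h).symm

lemma loop (hP : IsSimplePolytope3 P) (hF : IsFacetOf F P) : IsLoop P R.L :=
  ⟨by have := R.D.hk; omega, R.hL, fun _ i => R.edge hP hF i⟩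

lemma belt3 (hP : IsSimplePolytope3 P) (h4 : (facets P).ncard ≠ 4) (hF : IsFacetOf F P)
    (hk3 : R.D.k = 3) (i : Fin R.D.k) :
    R.L i ∩ R.L (nxt i) ∩ R.L (nxt (nxt i)) = ∅ := by
  by_contra hcon
  have hne := nonempty_iff_ne_empty.2 hcon
  obtain ⟨w, hw, ⟨h0, h1⟩, h2⟩ := face_vertex hP.1
    (face_inter (R.edge hP hF i).1 (R.hL (nxt (nxt i))).1 hne)
  have hk := R.D.hk
  have n3 : nxt (nxt (nxt i)) = i := by
    apply Fin.ext
    have := i.2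
    rw [nxt_val, nxt_val, nxt_val]
    split_ifs <;> omega
  have hr := R.vr (nxt (nxt i))
  rw [n3] at hr
  have a1 := nxt_ne (by omega) i
  have a2 := nxt_ne (by omega) (nxt i)
  have a3 := nxt_nxt_ne hk i
  have hi := R.inj hP hF
  exact h4 (four_facets hP hF (R.hL i) (R.hL (nxt i)) (R.hL (nxt (nxt i)))
    (R.hne _).symm (R.hne _).symm (R.hne _).symm (fun h => a1 (hi h).symm)
    (fun h => a3 (hi h).symm) (fun h => a2 (hi h).symm)
    hw (R.D.v_ext (nxt (nxt i))) (R.D.v_ext i) (R.D.v_ext (nxt i))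
    h0 h1 h2 (R.D.v_mem _) (R.vr _) (R.vl _) (R.D.v_mem _) (R.vl i) hr
    (R.D.v_mem _) (R.vr i) (R.vl _))

lemma belt4 (hP : IsFlag3Polytope P) (hF : IsFacetOf F P) (p q : Fin R.D.k) (hpq : p ≠ q)
    (hne : (R.L p ∩ R.L q).Nonempty) : q = nxt p ∨ p = nxt q := by
  by_contra! hcon
  have hempty : F ∩ R.L p ∩ R.L q = ∅ := by
    by_contra hc
    have hne' := nonempty_iff_ne_empty.2 hc
    have hface : IsFaceOf (F ∩ R.L p ∩ R.L q) P :=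
      face_inter (face_inter hF.1 (R.hL p).1 ⟨_, R.D.v_mem _, R.vl p⟩) (R.hL q).1 hne'
    obtain ⟨w, hw, ⟨h0, h1⟩, h2⟩ := face_vertex hP.1.1 hface
    have e1 : w ∈ F ∩ R.L p := ⟨h0, h1⟩
    have e2 : w ∈ F ∩ R.L q := ⟨h0, h2⟩
    rw [R.inter_F hP.1 hF] at e1 e2
    have hi := R.D.cyc.1
    rcases R.D.edge_vertex hF p hw e1 with h | h <;>
    rcases R.D.edge_vertex hF q hw e2 with h' | h'
    · exact hpq (hi (h.symm.trans h'))
    · exact hcon.2 (hi (h.symm.trans h'))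
    · exact hcon.1 (hi (h.symm.trans h')).symm
    · exact hpq (nxt_inj (hi (h.symm.trans h')))
  have hLL := facets_meet hP.1 (R.hL p) (R.hL q) (fun h => hpq (R.inj hP.1 hF h)) hne
  have hFp : IsEdgeOf (F ∩ R.L p) P := by rw [R.inter_F hP.1 hF]; exact R.D.edge hP.1.1 hF p
  have hFq : IsEdgeOf (R.L q ∩ F) P := by
    rw [inter_comm, R.inter_F hP.1 hF]; exact R.D.edge hP.1.1 hF q
  apply hP.2.2 ![F, R.L p, R.L q]
  have n0 : nxt (0 : Fin 3) = 1 := rfl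
  have n1 : nxt (1 : Fin 3) = 2 := rfl
  have n2 : nxt (2 : Fin 3) = 0 := rfl
  refine ⟨le_rfl, ⟨by norm_num, ?_, ?_⟩, ?_, by norm_num⟩
  · intro i
    fin_cases i
    exacts [hF, R.hL p, R.hL q]
  · intro _ i
    fin_cases i
    exacts [hFp, hLL, hFq]
  · intro _ i
    fin_cases i
    · exact hempty
    · show R.L p ∩ R.L q ∩ F = ∅
      rw [inter_comm, ← inter_assoc]; exact hempty
    · show R.L q ∩ F ∩ R.L p = ∅
      rw [inter_assoc, inter_comm]; exact hempty

lemma belt (hP : IsFlag3Polytope P) (hF : IsFacetOf F P) : IsBelt P R.L := by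
  refine ⟨R.D.hk, R.loop hP.1 hF, fun h => R.belt3 hP.1 hP.2.1 hF h, fun h p q hpq => ⟨
    R.belt4 hP hF p q hpq, ?_⟩⟩
  rintro (rfl | rfl)
  · exact (R.edge hP.1 hF p).1.1
  · rw [inter_comm]; exact (R.edge hP.1 hF q).1.1

end RingData

lemma facet_frontier {P A : Set E3} (hP : IsPolytope P) (hd : setDim P = 3) (hA : IsFacetOf A P) :
    A ⊆ frontier P := by
  intro x hx
  rw [(poly_compact hP).isClosed.frontier_eq]
  refine ⟨hA.1.2.2.2.1 hx, fun hxi => ?_⟩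
  have hsub := subset_of_relint hA.1.2.2.2 (interior_subset_intrinsicInterior hxi) hx
  have := setDim_mono hsub
  have := hA.2
  omega

lemma poly_interior {P : Set E3} (hP : IsPolytope P) (hd : setDim P = 3) :
    (interior P).Nonempty := by
  rw [(poly_convex hP).interior_nonempty_iff_affineSpan_eq_top]
  have hne : P.Nonempty := by
    rw [nonempty_iff_ne_empty]
    rintro rfl
    unfold setDim at hd
    rw [vectorSpan_empty, finrank_bot] at hd
    omega
  rw [AffineSubspace.affineSpan_eq_top_iff_vectorSpan_eq_top_of_nonempty _ _ _ hne]
  exact Submodule.eq_top_of_finrank_eq (by rw [finrank_E3]; exact hd)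

namespace FacetData
variable {P A : Set E3} (D : FacetData P A)

/-- The boundary cycle. -/
def bd : Set E3 := ⋃ i, segment ℝ (D.v i) (D.v (nxt i))

lemma bd_sub (hA : IsFacetOf A P) : D.bd ⊆ A := iUnion_subset fun i => D.edge_sub hA i

lemma sdiff_eq (hP : IsPolytope P) (hA : IsFacetOf A P) :
    A \ D.bd = A ∩ ⋂ i, {x | D.u i (D.v i) < D.u i x} := by
  ext x
  simp only [bd, mem_sdiff, mem_iUnion, not_exists, mem_inter_iff, mem_iInter, mem_ofPred_eq]
  refine and_congr_right fun hx => forall_congr' fun i => ?_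
  rw [← (D.edge_eq hP hA i).2]
  constructor
  · intro h
    exact lt_of_le_of_ne (D.u_nonneg hP hA i x hx) (fun h' => h ⟨hx, h'.symm⟩)
  · intro h h'
    exact h.ne h'.2.symm

lemma sdiff_convex (hP : IsPolytope P) (hA : IsFacetOf A P) : Convex ℝ (A \ D.bd) := by
  rw [D.sdiff_eq hP hA]
  exact hA.1.2.2.1.inter (convex_iInter fun i => convex_halfSpace_gt (D.u i).isLinear _)

lemma relint_sub (hP : IsPolytope P) (hA : IsFacetOf A P) :
    intrinsicInterior ℝ A ⊆ A \ D.bd := by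
  intro x hx
  refine ⟨intrinsicInterior_subset hx, fun h => ?_⟩
  obtain ⟨i, hi⟩ := mem_iUnion.1 h
  have h1 := face_of_subset hA.1 (D.edge hP hA i).1 (D.edge_sub hA i)
  have h2 := setDim_mono (subset_of_relint h1.2.2.2 hx hi)
  rw [hA.2, (D.edge hP hA i).2] at h2
  omega

lemma exists_open (hP : IsPolytope P) (hd : setDim P = 3) (hA : IsFacetOf A P) :
    ∃ V : Set E3, IsOpen V ∧ A \ D.bd ⊆ V ∧ V ∩ frontier P ⊆ A := by
  obtain ⟨o, ho⟩ := poly_interior hP hd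
  have hoP := interior_subset ho
  have hgo : D.c < D.g o := by
    refine lt_of_le_of_ne (D.gpos o hoP) fun h => ?_
    have h1 := facet_frontier hP hd hA ((D.gzero o hoP).1 h.symm)
    exact h1.2 ho
  have cont : ∀ f : E3 →ₗ[ℝ] ℝ, Continuous f := fun f => f.continuous_of_finiteDimensional
  refine ⟨{y | D.g y < D.g o} ∩ ⋂ i, {y | (D.u i (D.v i) - D.u i o) * (D.g o - D.g y) <
    (D.g o - D.c) * (D.u i y - D.u i o)}, ?_, ?_, ?_⟩
  · refine (isOpen_lt (cont _) continuous_const).inter (isOpen_iInter_of_finite fun i => ?_)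
    have := cont D.g
    have := cont (D.u i)
    exact isOpen_lt (by fun_prop) (by fun_prop)
  · intro x hx
    have hg : D.g x = D.c := (D.gzero x (hA.1.2.2.2.1 hx.1)).2 hx.1
    rw [D.sdiff_eq hP hA] at hx
    refine ⟨?_, mem_iInter.2 fun i => ?_⟩
    · show D.g x < D.g o
      rw [hg]; exact hgo
    · have h1 : D.u i (D.v i) < D.u i x := mem_iInter.1 hx.2 i
      show (D.u i (D.v i) - D.u i o) * (D.g o - D.g x) < (D.g o - D.c) * (D.u i x - D.u i o)
      rw [hg]
      nlinarith
  · rintro y ⟨⟨h1, h2⟩, h3⟩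
    have h1 : D.g y < D.g o := h1
    rw [(poly_compact hP).isClosed.frontier_eq] at h3
    have hyc := D.gpos y h3.1
    refine (D.gzero y h3.1).1 (le_antisymm ?_ hyc)
    by_contra hlt
    push Not at hlt
    set r := (D.g o - D.c) / (D.g o - D.g y) with hr
    have hpos : 0 < D.g o - D.g y := by linarith
    have hr' : r * (D.g o - D.g y) = D.g o - D.c := div_mul_cancel₀ _ hpos.ne'
    have hr1 : 1 < r := by rw [hr, one_lt_div hpos]; linarith
    have hy' : o + r • (y - o) ∈ A := by
      apply D.hrep hP hA
      · simp only [map_add, map_smul, map_sub, smul_eq_mul]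
        linarith
      · intro i
        have h4 : (D.u i (D.v i) - D.u i o) * (D.g o - D.g y) <
          (D.g o - D.c) * (D.u i y - D.u i o) := mem_iInter.1 h2 i
        simp only [map_add, map_smul, map_sub, smul_eq_mul]
        rw [← hr'] at h4
        have h5 : (D.u i (D.v i) - D.u i o) < r * (D.u i y - D.u i o) := by
          by_contra hc
          push Not at hc
          nlinarith
        linarith
    apply h3.2
    apply (poly_convex hP).openSegment_interior_self_subset_interior ho (hA.1.2.2.2.1 hy')
    have hr0 : r ≠ 0 := by linarith
    refine ⟨1 - r⁻¹, r⁻¹, ?_, by positivity, by ring, ?_⟩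
    · have := inv_lt_one_of_one_lt₀ hr1
      linarith
    · rw [smul_add, smul_smul, inv_mul_cancel₀ hr0]
      module

end FacetData

namespace RingData
variable {P F : Set E3} (R : RingData P F)

lemma outer_eq (i : Fin R.D.k) : R.L i \ F = R.L i ∩ {x | R.D.c < R.D.g x} := by
  ext x
  refine and_congr_right fun hx => ?_
  have hxP := (R.hL i).1.2.2.2.1 hx
  rw [← R.D.gzero x hxP]
  exact ⟨fun h => lt_of_le_of_ne (R.D.gpos x hxP) (fun h' => h h'.symm), fun h h' => h.ne h'.symm⟩

lemma outer_convex (i : Fin R.D.k) : Convex ℝ (R.L i \ F) := by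
  rw [R.outer_eq]
  exact (R.hL i).1.2.2.1.inter (convex_halfSpace_gt R.D.g.isLinear _)

lemma outer_relint (hF : IsFacetOf F P) (i : Fin R.D.k) :
    intrinsicInterior ℝ (R.L i) ⊆ R.L i \ F := by
  intro x hx
  refine ⟨intrinsicInterior_subset hx, fun h => ?_⟩
  have hf := face_inter (R.hL i).1 hF.1 ⟨_, R.vl i, R.D.v_mem i⟩
  have h1 := face_of_subset (R.hL i).1 hf inter_subset_left
  have h2 := subset_of_relint h1.2.2.2 hx ⟨intrinsicInterior_subset hx, h⟩
  exact R.hne i (facet_sub_eq (R.hL i) hF (fun y hy => (h2 hy).2))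

lemma outer_sub (hP : IsSimplePolytope3 P) (hF : IsFacetOf F P) (i : Fin R.D.k) :
    R.L i \ F ⊆ frontier P \ R.D.bd := fun _ hx =>
  ⟨facet_frontier hP.1 hP.2.1 (R.hL i) hx.1, fun h => hx.2 (R.D.bd_sub hF h)⟩

lemma outer_meet (hP : IsSimplePolytope3 P) (hF : IsFacetOf F P) (i : Fin R.D.k) :
    ∃ z, z ∈ R.L i \ F ∧ z ∈ R.L (nxt i) \ F := by
  by_contra! hcon
  have hk := R.D.hk
  have hsub : R.L i ∩ R.L (nxt i) ⊆ F := by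
    intro z hz
    by_contra hzF
    exact hcon z ⟨hz.1, hzF⟩ ⟨hz.2, hzF⟩
  have hE := R.edge hP hF i
  have key : ∀ j, R.L i ∩ R.L (nxt i) ⊆ R.L j →
      R.L i ∩ R.L (nxt i) = segment ℝ (R.D.v j) (R.D.v (nxt j)) := by
    intro j hj
    have h1 : R.L i ∩ R.L (nxt i) ⊆ segment ℝ (R.D.v j) (R.D.v (nxt j)) := by
      rw [← R.inter_F hP hF]; exact subset_inter hsub hj
    have h2 := face_of_subset (R.D.edge hP.1 hF j).1 hE.1 h1
    exact eq_of_dim h2.1 h2.2.2.1 h2.2.2.2 (by rw [hE.2, (R.D.edge hP.1 hF j).2])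
  have := R.D.edge_inj hF ((key i inter_subset_left).symm.trans (key (nxt i) inter_subset_right))
  exact nxt_ne (by omega) i this.symm

lemma cycle (hP : IsSimplePolytope3 P) (hF : IsFacetOf F P) :
    IsSimpleEdgeCycleVia P R.D.bd R.D.v :=
  ⟨R.D.hk, R.D.cyc.1, fun i => vertex_iff.2 (R.D.v_ext i), R.D.edge hP.1 hF, rfl⟩

lemma surrounds (hP : IsSimplePolytope3 P) (hF : IsFacetOf F P) : Surrounds P R.L F := by
  have hk := R.D.hk
  obtain ⟨x0, hx0⟩ := hF.1.1.intrinsicInterior hF.1.2.2.1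
  let i0 : Fin R.D.k := ⟨0, by omega⟩
  obtain ⟨y0, hy0⟩ := (R.hL i0).1.1.intrinsicInterior (R.hL i0).1.2.2.1
  have hx0F := R.D.relint_sub hP.1 hF hx0
  have hy0L := R.outer_relint hF i0 hy0
  have hFS : F \ R.D.bd ⊆ frontier P \ R.D.bd := fun x hx =>
    ⟨facet_frontier hP.1 hP.2.1 hF hx.1, hx.2⟩
  have hx0S := hFS hx0F
  have hy0S := R.outer_sub hP hF i0 hy0L
  have hC2 : F \ R.D.bd ⊆ connectedComponentIn (frontier P \ R.D.bd) x0 :=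
    (R.D.sdiff_convex hP.1 hF).isPreconnected.subset_connectedComponentIn hx0F hFS
  have hC1 : ∀ n (hn : n < R.D.k),
      R.L ⟨n, hn⟩ \ F ⊆ connectedComponentIn (frontier P \ R.D.bd) y0 := by
    intro n
    induction n with
    | zero =>
      intro hn
      exact (R.outer_convex _).isPreconnected.subset_connectedComponentIn hy0L
        (R.outer_sub hP hF _)
    | succ n ih =>
      intro hn
      obtain ⟨z, hz1, hz2⟩ := R.outer_meet hP hF ⟨n, by omega⟩
      have hnx : nxt (⟨n, by omega⟩ : Fin R.D.k) = ⟨n + 1, hn⟩ := by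
        apply Fin.ext
        rw [nxt_val, if_neg]
        simp only; omega
      rw [hnx] at hz2
      rw [connectedComponentIn_eq (ih (by omega) hz1)]
      exact (R.outer_convex _).isPreconnected.subset_connectedComponentIn hz2
        (R.outer_sub hP hF _)
  refine ⟨hF, R.D.bd, _, _, ⟨y0, hy0S, rfl⟩, ⟨x0, hx0S, rfl⟩, ?_, ?_, ?_⟩
  · intro heq
    obtain ⟨V, hV, hV1, hV2⟩ := R.D.exists_open hP.1 hP.2.1 hF
    have hpre := isPreconnected_connectedComponentIn (x := x0) (F := frontier P \ R.D.bd)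
    have hCS := connectedComponentIn_subset (frontier P \ R.D.bd) x0
    have hy : y0 ∈ connectedComponentIn (frontier P \ R.D.bd) x0 := by
      rw [← heq]; exact mem_connectedComponentIn hy0S
    obtain ⟨z, hz, hzV, hzF⟩ := hpre V Fᶜ hV hF.1.2.1.isOpen_compl
      (by
        intro x hx
        by_cases hxF : x ∈ F
        · exact Or.inl (hV1 ⟨hxF, (hCS hx).2⟩)
        · exact Or.inr hxF)
      ⟨x0, mem_connectedComponentIn hx0S, hV1 hx0F⟩ ⟨y0, hy, hy0L.2⟩
    exact hzF (hV2 ⟨hzV, (hCS hz).1⟩)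
  · refine ⟨R.loop hP hF, fun i => (R.outer_relint hF i).trans (hC1 i.1 i.2), R.D.k, R.D.v, id,
      R.cycle hP hF, R.hsub, fun i => Or.inr rfl, Function.surjective_id, fun _ => ?_⟩
    rw [Finset.filter_true_of_mem, Finset.card_univ, Fintype.card_fin]
    intro i _
    exact nxt_ne (by omega) i
  · refine ⟨⟨by norm_num, fun _ => hF, by norm_num⟩,
      fun _ => (R.D.relint_sub hP.1 hF).trans hC2, R.D.k, R.D.v, fun _ => 0,
      R.cycle hP hF, R.D.edge_sub hF, fun i => Or.inl rfl, ?_, by norm_num⟩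
    intro j
    exact ⟨i0, Subsingleton.elim _ _⟩

end RingData

/-- In a flag 3-polytope, any `k`-gonal facet (`k ≥ 3`) is surrounded by a `k`-belt. -/
theorem facet_surrounded_by_belt (P F : Set E3) (hP : IsFlag3Polytope P)
    {k : ℕ} (hk : 3 ≤ k) (hF : IsFacetOf F P) (hkF : facetEdges P F = k) :
    ∃ B : Fin k → Set E3, IsBelt P B ∧ Surrounds P B F := by
  obtain ⟨R⟩ := exists_ring hP.1 hF
  have h := R.D.facetEdges_eq hP.1.1 hF
  rw [hkF] at h
  subst h
  exact ⟨R.L, R.belt hP hF, R.surrounds hP.1 hF⟩
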